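/- arXiv:2308.10546 — 3 statements merged into one kernel-verified Lean document; each statement's English description precedes it below -/
import Mathlib

section
/- Let k ≥ 2 and t ≥ 2 be integers and let G be a fixed edge-critical graph with chromatic number χ(G) = k + 1. Then there exists n₀ such that for all integers n ≥ n₀, the Ramsey number satisfies R(G, K₁ + nK_t) = k·n·t + 1. -/
open SimpleGraph

/-- `containsCopy F G` : the graph `F` contains a copy of the graph `G` (as a subgraph). -/
def containsCopy {V W : Type*} (F : SimpleGraph V) (G : SimpleGraph W) : Prop :=
  ∃ f : G →g F, Function.Injective f

/-- `arrows N G H` : every red/blue coloring of the edges of `K_N` (given by the graph `R` of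
red edges, whose complement is the graph of blue edges) contains a red copy of `G` or a
blue copy of `H`. -/
def arrows {V W : Type*} (N : ℕ) (G : SimpleGraph V) (H : SimpleGraph W) : Prop :=
  ∀ R : SimpleGraph (Fin N), containsCopy R G ∨ containsCopy Rᶜ H

/-- The Ramsey number `R(G, H)`. -/
noncomputable def ramseyNumber {V W : Type*} (G : SimpleGraph V) (H : SimpleGraph W) : ℕ :=
  sInf { N : ℕ | 0 < N ∧ arrows N G H }

/-- The generalized fan `K₁ + nK_t` : the join of a single vertex (`none`) with `n` disjoint
copies of `K_t`. -/
def genFan (n t : ℕ) : SimpleGraph (Option (Fin n × Fin t)) :=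
  SimpleGraph.fromRel (fun a b =>
    a = none ∨ ∃ p q : Fin n × Fin t, a = some p ∧ b = some q ∧ p.1 = q.1)

/-- A graph `G` is edge-critical if it has an edge `e` with `χ(G - e) = χ(G) - 1`. -/
def EdgeCritical {V : Type*} (G : SimpleGraph V) : Prop :=
  ∃ u v : V, G.Adj u v ∧ (G.deleteEdges {s(u, v)}).chromaticNumber + 1 = G.chromaticNumber

/-- `K_m ⊔ K_{1,ℓ}` : the complete graph on the `m` vertices `some i`, together with one new
vertex `none` joined to exactly the `ℓ` vertices `some i` with `i < ℓ` (for `ℓ ≤ m`). -/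
def KstarK (m ℓ : ℕ) : SimpleGraph (Option (Fin m)) :=
  SimpleGraph.fromRel (fun a b =>
    ((∃ i : Fin m, a = some i) ∧ ∃ j : Fin m, b = some j) ∨
      (a = none ∧ ∃ j : Fin m, b = some j ∧ (j : ℕ) < ℓ))

/-- `starArrows m ℓ G H` : every red/blue coloring of the edges of `K_m ⊔ K_{1,ℓ}` (the red
edges forming a subgraph `R`, the blue edges the remaining edges) contains a red copy of `G`
or a blue copy of `H`. -/
def starArrows {V W : Type*} (m ℓ : ℕ) (G : SimpleGraph V) (H : SimpleGraph W) : Prop :=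
  ∀ R : SimpleGraph (Option (Fin m)), R ≤ KstarK m ℓ →
    containsCopy R G ∨ containsCopy (KstarK m ℓ \ R) H

/-- The star-critical Ramsey number `r₊(G, H)`. -/
noncomputable def starRamsey {V W : Type*} (G : SimpleGraph V) (H : SimpleGraph W) : ℕ :=
  sInf { ℓ : ℕ | starArrows (ramseyNumber G H - 1) ℓ G H }

/-- The chromatic number of `G` as a natural number. -/
noncomputable def chromNum {V : Type*} (G : SimpleGraph V) : ℕ := G.chromaticNumber.toNat

/-- `s(G)` : the minimum size of a color class over all proper `χ(G)`-colorings of `G`. -/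
noncomputable def minClassSize {V : Type*} (G : SimpleGraph V) : ℕ :=
  sInf { m : ℕ | ∃ C : G.Coloring (Fin (chromNum G)), ∃ i : Fin (chromNum G),
    m = {v | C v = i}.ncard }

/-- `τ(G)` : the minimum, over all proper `χ(G)`-colorings of `G` having a color class `U_j`
of size `s(G)`, over all vertices `v ∈ U_j` and all other color classes `U_i`, of the number
of neighbors of `v` in `U_i`. -/
noncomputable def tauNum {V : Type*} (G : SimpleGraph V) : ℕ :=
  sInf { m : ℕ | ∃ C : G.Coloring (Fin (chromNum G)), ∃ j : Fin (chromNum G),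
    {v | C v = j}.ncard = minClassSize G ∧
    ∃ v, C v = j ∧ ∃ i : Fin (chromNum G), i ≠ j ∧ m = {u | C u = i ∧ G.Adj v u}.ncard }

open Classical in
lemma embed_aux {V W : Type*} [Fintype V] (G : SimpleGraph V) (F : SimpleGraph W)
    (S : V → Finset W) (d : ℕ) (T0 : Finset V) (f0 : V → W)
    (hf0 : ∀ x ∈ T0, f0 x ∈ S x) (hinj : ∀ x ∈ T0, ∀ y ∈ T0, f0 x = f0 y → x = y)
    (hadj : ∀ x ∈ T0, ∀ y ∈ T0, G.Adj x y → F.Adj (f0 x) (f0 y))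
    (hS : ∀ x, x ∉ T0 → Fintype.card V * (d + 1) < (S x).card)
    (hd : ∀ y x, x ∉ T0 → G.Adj y x → ∀ a ∈ S y, ((S x).filter (fun b => ¬ F.Adj a b)).card ≤ d) :
    containsCopy F G := by
  have key : ∀ T : Finset V, ∃ f : V → W, (∀ x ∈ T0 ∪ T, f x ∈ S x) ∧
      (∀ x ∈ T0 ∪ T, ∀ y ∈ T0 ∪ T, f x = f y → x = y) ∧
      (∀ x ∈ T0 ∪ T, ∀ y ∈ T0 ∪ T, G.Adj x y → F.Adj (f x) (f y)) := by
    intro T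
    induction T using Finset.induction_on with
    | empty => exact ⟨f0, by simpa using hf0, by simpa using hinj, by simpa using hadj⟩
    | insert x T hxT ih =>
      obtain ⟨f, h1, h2, h3⟩ := ih
      by_cases hx : x ∈ T0 ∪ T
      · have : T0 ∪ insert x T = T0 ∪ T := by
          rw [Finset.union_insert, Finset.insert_eq_of_mem hx]
        rw [this]
        exact ⟨f, h1, h2, h3⟩
      · have hx0 : x ∉ T0 := fun h => hx (Finset.mem_union_left _ h)
        let Bad : Finset W := (T0 ∪ T).biUnion (fun y => insert (f y)
          (if G.Adj y x then (S x).filter (fun b => ¬ F.Adj (f y) b) else ∅))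
        have hBad : Bad.card ≤ (T0 ∪ T).card * (d + 1) := by
          apply Finset.card_biUnion_le_card_mul
          intro y hy
          refine (Finset.card_insert_le _ _).trans ?_
          split_ifs with h
          · have := hd y x hx0 h (f y) (h1 y hy)
            omega
          · simp
        have hlt : Bad.card < (S x).card := by
          refine lt_of_le_of_lt (hBad.trans ?_) (hS x hx0)
          exact Nat.mul_le_mul_right _ (Finset.card_le_univ _)
        obtain ⟨b, hbS, hbB⟩ := Finset.exists_mem_notMem_of_card_lt_card hlt
        have hb1 : ∀ y ∈ T0 ∪ T, f y ≠ b := by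
          intro y hy he
          exact hbB (Finset.mem_biUnion.2 ⟨y, hy, by simp [he]⟩)
        have hb2 : ∀ y ∈ T0 ∪ T, G.Adj y x → F.Adj (f y) b := by
          intro y hy hyx
          by_contra hn
          exact hbB (Finset.mem_biUnion.2 ⟨y, hy, by simp [hyx, hbS, hn]⟩)
        have hne : ∀ y ∈ T0 ∪ T, y ≠ x := fun y hy he => hx (he ▸ hy)
        refine ⟨Function.update f x b, ?_, ?_, ?_⟩
        · intro y hy
          rw [Finset.union_insert, Finset.mem_insert] at hy
          rcases hy with rfl | hy
          · simpa using hbS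
          · rw [Function.update_of_ne (hne y hy)]; exact h1 y hy
        · intro y hy z hz hyz
          rw [Finset.union_insert, Finset.mem_insert] at hy hz
          rcases hy with rfl | hy <;> rcases hz with rfl | hz
          · rfl
          · rw [Function.update_self, Function.update_of_ne (hne z hz)] at hyz
            exact absurd hyz.symm (hb1 z hz)
          · rw [Function.update_self, Function.update_of_ne (hne y hy)] at hyz
            exact absurd hyz (hb1 y hy)
          · rw [Function.update_of_ne (hne y hy), Function.update_of_ne (hne z hz)] at hyz
            exact h2 y hy z hz hyz
        · intro y hy z hz hyz
          rw [Finset.union_insert, Finset.mem_insert] at hy hz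
          rcases hy with rfl | hy <;> rcases hz with rfl | hz
          · exact absurd hyz (G.irrefl)
          · rw [Function.update_self, Function.update_of_ne (hne z hz)]
            exact (hb2 z hz hyz.symm).symm
          · rw [Function.update_self, Function.update_of_ne (hne y hy)]
            exact hb2 y hy hyz
          · rw [Function.update_of_ne (hne y hy), Function.update_of_ne (hne z hz)]
            exact h3 y hy z hz hyz
  obtain ⟨f, -, h2, h3⟩ := key Finset.univ
  exact ⟨⟨f, fun {a b} h => h3 a (by simp) b (by simp) h⟩,
    fun a b h => h2 a (by simp) b (by simp) h⟩

/-- `G` minus the edge `uv` is properly coloured by `c`, with `u, v` of the same colour. -/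
structure Crit {V : Type*} (G : SimpleGraph V) (k : ℕ) (u v : V) (c : V → Fin k) : Prop where
  adj : G.Adj u v
  same : c u = c v
  proper : ∀ x y, G.Adj x y → s(x, y) ≠ s(u, v) → c x ≠ c y

lemma Crit.recolor {V : Type*} {G : SimpleGraph V} {k : ℕ} {u v : V} {c : V → Fin k}
    (h : Crit G k u v c) (i : Fin k) : ∃ c' : V → Fin k, Crit G k u v c' ∧ c' u = i := by
  refine ⟨fun x => Equiv.swap (c u) i (c x), ⟨h.adj, by simp [h.same], ?_⟩, by simp⟩
  intro x y hxy hne he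
  exact h.proper x y hxy hne ((Equiv.swap (c u) i).injective he)

open Classical in
lemma exists_few {V W : Type*} [Fintype V] {G : SimpleGraph V} {k : ℕ} {u v : V} {c : V → Fin k}
    (h : Crit G k u v c) (F : SimpleGraph W) (hF : ¬ containsCopy F G)
    (A : Fin k → Finset W) (d : ℕ)
    (hA : ∀ i j, i ≠ j → ∀ a ∈ A i, ((A j).filter (fun b => ¬ F.Adj a b)).card ≤ d) (w : W) :
    ∃ i, ((A i).filter (fun b => F.Adj w b)).card ≤ Fintype.card V * (d + 1) := by
  by_contra! hcon
  apply hF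
  refine embed_aux G F (fun x => if x = u then {w} else (A (c x)).filter (fun b => F.Adj w b))
    d {u} (fun _ => w) ?_ ?_ ?_ ?_ ?_
  · simp
  · simp
  · simp
  · intro x hx
    have : x ≠ u := by simpa using hx
    simpa [this] using hcon (c x)
  · intro y x hx hyx a ha
    have hxu : x ≠ u := by simpa using hx
    simp only [hxu, if_false]
    by_cases hy : y = u
    · simp only [hy, if_true, Finset.mem_singleton] at ha
      subst ha
      rw [Finset.filter_filter, Finset.filter_false_of_mem]
      · simp
      · intro b _ hb; exact hb.2 hb.1
    · simp only [hy, if_false, Finset.mem_filter] at ha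
      have hne : c y ≠ c x := by
        apply h.proper y x hyx
        intro he
        rcases Sym2.eq_iff.1 he with ⟨h1, _⟩ | ⟨_, h1⟩
        · exact hy h1
        · exact hxu h1
      refine (Finset.card_le_card ?_).trans (hA _ _ hne a ha.1)
      exact Finset.filter_subset_filter _ (Finset.filter_subset _ _)

open Classical in
lemma not_adj_of_many {V W : Type*} [Fintype V] {G : SimpleGraph V} {k : ℕ} {u v : V}
    {c : V → Fin k}
    (h : Crit G k u v c) (F : SimpleGraph W) (hF : ¬ containsCopy F G)
    (A : Fin k → Finset W) (d : ℕ)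
    (hA : ∀ i j, i ≠ j → ∀ a ∈ A i, ((A j).filter (fun b => ¬ F.Adj a b)).card ≤ d)
    (w w' : W) (i : Fin k) (hi : Fintype.card V * (d + 1) < (A i).card)
    (hj : ∀ j, j ≠ i → Fintype.card V * (d + 1) <
      ((A j).filter (fun b => F.Adj w b ∧ F.Adj w' b)).card) : ¬ F.Adj w w' := by
  intro hww
  obtain ⟨c, h, rfl⟩ := h.recolor i
  have huv : u ≠ v := h.adj.ne
  apply hF
  refine embed_aux G F (fun x => if x = u then {w} else if x = v then {w'} else
      if c x = c u then A (c x) else (A (c x)).filter (fun b => F.Adj w b ∧ F.Adj w' b))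
    d {u, v} (fun x => if x = u then w else w') ?_ ?_ ?_ ?_ ?_
  · intro x hx
    simp only [Finset.mem_insert, Finset.mem_singleton] at hx
    rcases hx with rfl | rfl
    · simp
    · simp [huv.symm]
  · intro x hx y hy
    simp only [Finset.mem_insert, Finset.mem_singleton] at hx hy
    rcases hx with rfl | rfl <;> rcases hy with rfl | rfl <;>
      simp [huv, huv.symm, hww.ne, hww.ne.symm]
  · intro x hx y hy
    simp only [Finset.mem_insert, Finset.mem_singleton] at hx hy
    rcases hx with rfl | rfl <;> rcases hy with rfl | rfl <;>
      simp [huv, huv.symm, hww, hww.symm]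
  · intro x hx
    have hx : x ≠ u ∧ x ≠ v := by simpa using hx
    simp only [hx.1, hx.2, if_false]
    split_ifs with hc
    · rw [hc]; exact hi
    · exact hj _ hc
  · intro y x hx hyx a ha
    have hx : x ≠ u ∧ x ≠ v := by simpa using hx
    have hne : c y ≠ c x := by
      apply h.proper y x hyx
      intro he
      rcases Sym2.eq_iff.1 he with ⟨_, h1⟩ | ⟨_, h1⟩
      · exact hx.2 h1
      · exact hx.1 h1
    simp only [hx.1, hx.2, if_false]
    by_cases hy : y = u
    · subst hy
      simp only [if_true, Finset.mem_singleton] at ha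
      subst ha
      rw [if_neg hne.symm, Finset.filter_filter, Finset.filter_false_of_mem]
      · simp
      · intro b _ hb; exact hb.2 hb.1.1
    by_cases hyv : y = v
    · subst hyv
      simp only [hy, if_false, if_true, Finset.mem_singleton] at ha
      subst ha
      rw [h.same, if_neg hne.symm, Finset.filter_filter, Finset.filter_false_of_mem]
      · simp
      · intro b _ hb; exact hb.2 hb.1.2
    · have ha' : a ∈ A (c y) := by
        simp only [hy, hyv, if_false] at ha
        split_ifs at ha
        · exact ha
        · exact (Finset.mem_filter.1 ha).1
      refine (Finset.card_le_card ?_).trans (hA _ _ hne a ha')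
      apply Finset.filter_subset_filter
      split_ifs
      · exact subset_rfl
      · exact Finset.filter_subset _ _

open Classical in
lemma blowup (k : ℕ) (hk : 2 ≤ k) (C M : ℕ) : ∃ N0 : ℕ, ∀ N, N0 ≤ N →
    ∀ F : SimpleGraph (Fin N),
    (∀ v, k * (Finset.univ.filter (fun w => ¬ F.Adj v w)).card ≤ N + C) →
    ∃ A : Fin k → Finset (Fin N), (∀ i, (A i).card = M) ∧
      ∀ i j, i ≠ j → ∀ a ∈ A i, ∀ b ∈ A j, F.Adj a b := by
  obtain ⟨r, rfl⟩ : ∃ r, k = r + 1 := ⟨k - 1, by omega⟩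
  have hr : (1 : ℝ) ≤ r := by
    have : 1 ≤ r := by omega
    exact_mod_cast this
  have hε : (0 : ℝ) < 1 / (2 * r * (r + 1)) := by positivity
  have h := eventually_completeEquipartiteGraph_isContained_of_minDegree hε r M
  obtain ⟨N1, hN1⟩ := Filter.eventually_atTop.1 h
  refine ⟨max N1 (2 * r * C + 1), fun N hN F hF => ?_⟩
  have hNr : (2 * r * C : ℝ) ≤ N := by
    have : 2 * r * C ≤ N := by have := le_max_right N1 (2 * r * C + 1); omega
    exact_mod_cast this
  have hNpos : 0 < N := by have := le_max_right N1 (2 * r * C + 1); omega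
  have : Nonempty (Fin N) := ⟨⟨0, hNpos⟩⟩
  have hmin : (F.minDegree : ℝ) ≥ (1 - 1 / r + 1 / (2 * r * (r + 1))) * N := by
    obtain ⟨v, hv⟩ := F.exists_minimal_degree_vertex
    rw [hv]
    have h1 : F.degree v + (Finset.univ.filter (fun w => ¬ F.Adj v w)).card = N := by
      have := Finset.card_filter_add_card_filter_not (s := (Finset.univ : Finset (Fin N)))
        (fun w => F.Adj v w)
      rw [← F.card_neighborFinset_eq_degree, F.neighborFinset_eq_filter]
      simpa using this
    have h2 := hF v
    have h1' : (F.degree v : ℝ) + ((Finset.univ.filter (fun w => ¬ F.Adj v w)).card : ℝ) = N := by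
      exact_mod_cast h1
    have h2' : ((r : ℝ) + 1) * ((Finset.univ.filter (fun w => ¬ F.Adj v w)).card : ℝ) ≤ N + C := by
      exact_mod_cast h2
    have h3 : (1 - 1 / (r : ℝ) + 1 / (2 * r * (r + 1))) * N
        = (2 * r ^ 2 * N - N) / (2 * r * (r + 1)) := by
      field_simp
      ring
    rw [h3, ge_iff_le, div_le_iff₀ (by positivity)]
    nlinarith
  obtain ⟨f⟩ := hN1 N ((le_max_left _ _).trans hN) hmin
  refine ⟨fun i => Finset.univ.image (fun x : Fin M => f (i, x)), ?_, ?_⟩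
  · intro i
    rw [Finset.card_image_of_injective]
    · simp
    · intro x y hxy
      have := f.injective hxy
      simpa using this
  · intro i j hij a ha b hb
    simp only [Finset.mem_image, Finset.mem_univ, true_and] at ha hb
    obtain ⟨x, rfl⟩ := ha
    obtain ⟨y, rfl⟩ := hb
    apply f.toHom.map_adj
    rw [completeEquipartiteGraph_adj]
    exact hij

open Classical in
lemma near_partition {V : Type*} [Fintype V] {G : SimpleGraph V} {k : ℕ} {u v : V}
    {c : V → Fin k} (h : Crit G k u v c) (hk : 2 ≤ k) (C Q : ℕ) (hQ : 1 ≤ Q) :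
    ∃ N0 : ℕ, ∀ N, N0 ≤ N → ∀ F : SimpleGraph (Fin N), ¬ containsCopy F G →
    (∀ v, k * (Finset.univ.filter (fun w => ¬ F.Adj v w)).card ≤ N + C) →
    ∃ (A : Fin k → Finset (Fin N)) (d : ℕ), Q * d ≤ N ∧ (∀ i, N ≤ k * (A i).card + k * d) ∧
      (∀ i j, i ≠ j → Disjoint (A i) (A j)) ∧
      ∀ i j, i ≠ j → ∀ a ∈ A i, ((A j).filter (fun b => ¬ F.Adj a b)).card ≤ d := by
  set m := Fintype.card V with hm
  have hmpos : 1 ≤ m := Fintype.card_pos_iff.2 ⟨u⟩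
  obtain ⟨N1, hN1⟩ := blowup k hk C (8 * m * Q)
  refine ⟨max N1 (10 * Q * C), fun N hN F hF hdeg => ?_⟩
  have hN2 : 10 * Q * C ≤ N := (le_max_right _ _).trans hN
  obtain ⟨A, hAc, hA⟩ := hN1 N ((le_max_left _ _).trans hN) F hdeg
  set L := 2 * m * Q with hL
  have hmL : m < 2 * L := by nlinarith
  have hM : 8 * m * Q = 4 * L := by rw [hL]; ring
  rw [hM] at hAc
  have hA0 : ∀ i j, i ≠ j → ∀ a ∈ A i, ((A j).filter (fun b => ¬ F.Adj a b)).card ≤ 0 := by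
    intro i j hij a ha
    rw [Finset.filter_false_of_mem]
    · simp
    · intro b hb hn
      exact hn (hA i j hij a ha b hb)
  let g : Fin N → Fin k → ℕ := fun v i => ((A i).filter (fun b => ¬ F.Adj v b)).card
  have hg : ∀ v i, ((A i).filter (fun b => F.Adj v b)).card + g v i = 4 * L := by
    intro v i
    rw [← hAc i]
    exact Finset.card_filter_add_card_filter_not _
  choose c' hc' using fun w => exists_few h F hF A 0 hA0 w
  rw [← hm] at hc'
  have hgc : ∀ v, 4 * L ≤ g v (c' v) + m := by
    intro v
    have h1 := hg v (c' v)
    have h2 := hc' v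
    omega
  let tot : Fin N → ℕ := fun v => ∑ i, g v i
  have htot : ∑ v, tot v ≤ 4 * L * (N + C) := by
    have e1 : ∑ v, tot v =
        ∑ i, ∑ a ∈ A i, (Finset.univ.filter (fun w => ¬ F.Adj a w)).card := by
      simp only [tot, g]
      rw [Finset.sum_comm]
      refine Finset.sum_congr rfl fun i _ => ?_
      simp only [Finset.card_filter]
      rw [Finset.sum_comm]
      refine Finset.sum_congr rfl fun a _ => Finset.sum_congr rfl fun b _ => ?_
      simp only [F.adj_comm]
    have e2 : k * ∑ v, tot v ≤ k * (4 * L * (N + C)) := by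
      rw [e1, Finset.mul_sum]
      calc ∑ i, k * ∑ a ∈ A i, (Finset.univ.filter (fun w => ¬ F.Adj a w)).card
          ≤ ∑ i : Fin k, 4 * L * (N + C) := by
            refine Finset.sum_le_sum fun i _ => ?_
            rw [Finset.mul_sum]
            refine (Finset.sum_le_card_nsmul _ _ (N + C) fun a _ => hdeg a).trans ?_
            rw [hAc i, smul_eq_mul]
        _ = _ := by simp
    exact Nat.le_of_mul_le_mul_left e2 (by omega)
  let Exc : Finset (Fin N) := Finset.univ.filter (fun v => 5 * L ≤ tot v + m)
  have hExc : Exc.card * L + N * (4 * L) ≤ ∑ v, (tot v + m) := by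
    have : ∀ v, (if v ∈ Exc then L else 0) + 4 * L ≤ tot v + m := by
      intro v
      split_ifs with hv
      · have := (Finset.mem_filter.1 hv).2
        omega
      · have h1 := hgc v
        have h2 : g v (c' v) ≤ tot v :=
          Finset.single_le_sum (f := g v) (fun _ _ => Nat.zero_le _) (Finset.mem_univ _)
        omega
    have h2 := Finset.sum_le_sum (s := Finset.univ) fun v _ => this v
    rw [Finset.sum_add_distrib] at h2
    simpa using h2
  have hExc2 : Exc.card * (2 * Q) ≤ N + 8 * Q * C := by
    have h1 : ∑ v, (tot v + m) ≤ 4 * L * (N + C) + N * m := by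
      rw [Finset.sum_add_distrib]
      simpa using htot
    have h2 : m * (Exc.card * (2 * Q)) ≤ m * (N + 8 * Q * C) := by
      have := hExc.trans h1
      rw [hL] at this
      nlinarith
    exact Nat.le_of_mul_le_mul_left h2 hmpos
  let B : Fin k → Finset (Fin N) := fun i => Finset.univ.filter (fun v => v ∉ Exc ∧ c' v = i)
  have hsmall : ∀ v, v ∉ Exc → ∀ j, j ≠ c' v → g v j < L := by
    intro v hv j hj
    have h1 : g v j + g v (c' v) ≤ tot v := by
      rw [← Finset.sum_pair (f := g v) hj]
      exact Finset.sum_le_sum_of_subset (Finset.subset_univ _)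
    have h2 : ¬ 5 * L ≤ tot v + m := fun hh => hv (Finset.mem_filter.2 ⟨Finset.mem_univ _, hh⟩)
    have h3 := hgc v
    omega
  have hBind : ∀ i, ∀ v ∈ B i, ∀ w ∈ B i, ¬ F.Adj v w := by
    intro i v hv w hw
    obtain ⟨hv1, hv2⟩ := (Finset.mem_filter.1 hv).2
    obtain ⟨hw1, hw2⟩ := (Finset.mem_filter.1 hw).2
    refine not_adj_of_many h F hF A 0 hA0 v w i ?_ ?_
    · rw [hAc, ← hm]; omega
    · intro j hj
      have h1 := hsmall v hv1 j (by rw [hv2]; exact hj)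
      have h2 := hsmall w hw1 j (by rw [hw2]; exact hj)
      have h3 : (A j).card ≤ ((A j).filter (fun b => F.Adj v b ∧ F.Adj w b)).card
          + (g v j + g w j) := by
        refine (Finset.card_le_card (t := (A j).filter (fun b => F.Adj v b ∧ F.Adj w b) ∪
          ((A j).filter (fun b => ¬ F.Adj v b) ∪ (A j).filter (fun b => ¬ F.Adj w b))) ?_).trans
          ((Finset.card_union_le _ _).trans (Nat.add_le_add_left (Finset.card_union_le _ _) _))
        intro b hb
        simp only [Finset.mem_union, Finset.mem_filter]
        tauto
      rw [hAc] at h3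
      omega
  have hBdis : ∀ i j, i ≠ j → Disjoint (B i) (B j) := by
    intro i j hij
    rw [Finset.disjoint_left]
    intro v hv hw
    exact hij ((Finset.mem_filter.1 hv).2.2.symm.trans (Finset.mem_filter.1 hw).2.2)
  have hBle : ∀ i, ∀ v ∈ B i, (B i).card ≤ (Finset.univ.filter (fun w => ¬ F.Adj v w)).card := by
    intro i v hv
    refine Finset.card_le_card fun w hw => ?_
    exact Finset.mem_filter.2 ⟨Finset.mem_univ _, hBind i v hv w hw⟩
  have hBle' : ∀ i, k * (B i).card ≤ N + C := by
    intro i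
    rcases (B i).eq_empty_or_nonempty with he | ⟨v, hv⟩
    · simp [he]
    · exact (Nat.mul_le_mul_left k (hBle i v hv)).trans (hdeg v)
  have hcover : N ≤ Exc.card + ∑ i, (B i).card := by
    have : (Finset.univ : Finset (Fin N)) ⊆ Exc ∪ Finset.univ.biUnion B := by
      intro v _
      by_cases hv : v ∈ Exc
      · exact Finset.mem_union_left _ hv
      · refine Finset.mem_union_right _ (Finset.mem_biUnion.2 ⟨c' v, Finset.mem_univ _, ?_⟩)
        exact Finset.mem_filter.2 ⟨Finset.mem_univ _, hv, rfl⟩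
    have h1 := (Finset.card_le_card this).trans ((Finset.card_union_le _ _).trans
      (Nat.add_le_add_left Finset.card_biUnion_le _))
    simpa using h1
  have hBge : ∀ i, N ≤ k * (B i).card + k * Exc.card + (k - 1) * C := by
    intro i
    have h1 : k * ∑ i, (B i).card ≤ k * (B i).card + (k - 1) * (N + C) := by
      rw [Finset.mul_sum, ← Finset.add_sum_erase _ _ (Finset.mem_univ i)]
      refine Nat.add_le_add_left ?_ _
      refine (Finset.sum_le_card_nsmul _ _ (N + C) fun a _ => hBle' a).trans ?_
      simp
    have h2 := Nat.mul_le_mul_left k hcover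
    obtain ⟨r, rfl⟩ : ∃ r, k = r + 1 := ⟨k - 1, by omega⟩
    simp only [Nat.add_sub_cancel] at *
    nlinarith
  refine ⟨B, Exc.card + C, ?_, ?_, hBdis, ?_⟩
  · nlinarith
  · intro i
    have h1 := hBge i
    have h2 : (k - 1) * C ≤ k * C := Nat.mul_le_mul_right _ (by omega)
    nlinarith
  · intro i j hij a ha
    have h1 : (B i).card + ((B j).filter (fun b => ¬ F.Adj a b)).card ≤
        (Finset.univ.filter (fun w => ¬ F.Adj a w)).card := by
      rw [← Finset.card_union_of_disjoint
        (Finset.disjoint_of_subset_right (Finset.filter_subset _ _) (hBdis i j hij))]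
      refine Finset.card_le_card fun w hw => ?_
      rw [Finset.mem_filter]
      refine ⟨Finset.mem_univ _, ?_⟩
      rcases Finset.mem_union.1 hw with hw | hw
      · exact hBind i a ha w hw
      · exact (Finset.mem_filter.1 hw).2
    have h2 := hdeg a
    have h3 := hBge i
    have h4 := Nat.mul_le_mul_left k h1
    obtain ⟨r, rfl⟩ : ∃ r, k = r + 1 := ⟨k - 1, by omega⟩
    simp only [Nat.add_sub_cancel] at *
    have h5 : (r + 1) * ((B j).filter (fun b => ¬ F.Adj a b)).card ≤ (r + 1) * (Exc.card + C) := by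
      nlinarith
    exact Nat.le_of_mul_le_mul_left h5 (by omega)

open Classical in
lemma colorable_of_deg {V : Type*} [Fintype V] {G : SimpleGraph V} {k : ℕ} {u v : V}
    {c : V → Fin k} (h : Crit G k u v c) (hk : 2 ≤ k) (C : ℕ) :
    ∃ N0 : ℕ, ∀ N, N0 ≤ N → ∀ F : SimpleGraph (Fin N), ¬ containsCopy F G →
    (∀ v, k * (Finset.univ.filter (fun w => ¬ F.Adj v w)).card ≤ N + C) →
    ∃ c' : Fin N → Fin k, ∀ v w, c' v = c' w → ¬ F.Adj v w := by
  set m := Fintype.card V with hm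
  obtain ⟨N1, hN1⟩ := near_partition h hk C (2 * k * (3 + 3 * m)) (by
    have : 0 < 2 * k * (3 + 3 * m) := by positivity
    omega)
  refine ⟨max N1 (2 * k * (2 * C + 3 * m) + 1), fun N hN F hF hdeg => ?_⟩
  have hN2 : 2 * k * (2 * C + 3 * m) + 1 ≤ N := (le_max_right _ _).trans hN
  obtain ⟨A, d, hQd, hAc, hdis, hA⟩ := hN1 N ((le_max_left _ _).trans hN) F hF hdeg
  choose c' hc' using fun w => exists_few h F hF A d hA w
  rw [← hm] at hc'
  set D := C + d + m * (d + 1) with hD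
  have hsmall : ∀ v, ∀ j, j ≠ c' v → ((A j).filter (fun b => ¬ F.Adj v b)).card ≤ D := by
    intro v j hj
    have h1 : ((A (c' v)).filter (fun b => ¬ F.Adj v b)).card
        + ((A j).filter (fun b => ¬ F.Adj v b)).card ≤
        (Finset.univ.filter (fun w => ¬ F.Adj v w)).card := by
      rw [← Finset.card_union_of_disjoint (Finset.disjoint_of_subset_right
        (Finset.filter_subset _ _) (Finset.disjoint_of_subset_left
        (Finset.filter_subset _ _) (hdis _ _ hj.symm))), ← Finset.filter_union]
      exact Finset.card_le_card (Finset.filter_subset_filter _ (Finset.subset_univ _))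
    have h2 : ((A (c' v)).filter (fun b => F.Adj v b)).card
        + ((A (c' v)).filter (fun b => ¬ F.Adj v b)).card = (A (c' v)).card :=
      Finset.card_filter_add_card_filter_not _
    have h3 := hc' v
    have h4 : ((A j).filter (fun b => ¬ F.Adj v b)).card + (A (c' v)).card ≤
        (Finset.univ.filter (fun w => ¬ F.Adj v w)).card + m * (d + 1) := by omega
    have h5 := Nat.mul_le_mul_left k h4
    have h6 := hdeg v
    have h7 := hAc (c' v)
    have h8 : C ≤ k * C := Nat.le_mul_of_pos_left _ (by omega)
    have h9 : k * ((A j).filter (fun b => ¬ F.Adj v b)).card ≤ k * D := by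
      rw [hD]
      simp only [mul_add] at *
      omega
    exact Nat.le_of_mul_le_mul_left h9 (by omega)
  have hbig : ∀ j, 2 * D + m * (d + 1) < (A j).card := by
    intro j
    have h1 := hAc j
    have h2 : k * (2 * D + m * (d + 1)) < k * (A j).card := by
      rw [hD]
      nlinarith
    exact Nat.lt_of_mul_lt_mul_left h2
  refine ⟨c', fun v w hvw => ?_⟩
  refine not_adj_of_many h F hF A d hA v w (c' v) ?_ ?_
  · rw [← hm]
    have := hbig (c' v)
    omega
  · intro j hj
    have h1 := hsmall v j hj
    have h2 := hsmall w j (hvw ▸ hj)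
    have h3 : (A j).card ≤ ((A j).filter (fun b => F.Adj v b ∧ F.Adj w b)).card
        + (((A j).filter (fun b => ¬ F.Adj v b)).card
        + ((A j).filter (fun b => ¬ F.Adj w b)).card) := by
      refine (Finset.card_le_card (t := (A j).filter (fun b => F.Adj v b ∧ F.Adj w b) ∪
        ((A j).filter (fun b => ¬ F.Adj v b) ∪ (A j).filter (fun b => ¬ F.Adj w b))) ?_).trans
        ((Finset.card_union_le _ _).trans (Nat.add_le_add_left (Finset.card_union_le _ _) _))
      intro b hb
      simp only [Finset.mem_union, Finset.mem_filter]
      tauto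
    have h4 := hbig j
    rw [← hm]
    omega

open Classical in
lemma ramsey_aux (a b : ℕ) : ∃ R : ℕ, ∀ (N : ℕ) (F : SimpleGraph (Fin N)) (S : Finset (Fin N)),
    R ≤ S.card → (∃ T ⊆ S, T.card = a ∧ ∀ x ∈ T, ∀ y ∈ T, x ≠ y → F.Adj x y) ∨
      (∃ T ⊆ S, T.card = b ∧ ∀ x ∈ T, ∀ y ∈ T, ¬ F.Adj x y) := by
  induction a generalizing b with
  | zero => exact ⟨0, fun N F S _ => Or.inl ⟨∅, by simp⟩⟩
  | succ a iha =>
    induction b with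
    | zero => exact ⟨0, fun N F S _ => Or.inr ⟨∅, by simp⟩⟩
    | succ b ihb =>
      obtain ⟨R1, h1⟩ := iha (b + 1)
      obtain ⟨R2, h2⟩ := ihb
      refine ⟨R1 + R2 + 1, fun N F S hS => ?_⟩
      obtain ⟨v, hv⟩ : S.Nonempty := Finset.card_pos.1 (by omega)
      have hsplit := Finset.card_filter_add_card_filter_not (s := S.erase v) (fun w => F.Adj v w)
      rw [Finset.card_erase_of_mem hv] at hsplit
      have hsub : ∀ (p : Fin N → Prop) [DecidablePred p], (S.erase v).filter p ⊆ S := fun p _ =>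
        (Finset.filter_subset _ _).trans (Finset.erase_subset _ _)
      rcases le_or_gt R1 ((S.erase v).filter (fun w => F.Adj v w)).card with hc | hc
      · rcases h1 N F _ hc with ⟨T, hT, hTc, hTa⟩ | ⟨T, hT, hTc, hTa⟩
        · left
          have hvT : v ∉ T := fun hh => F.irrefl (Finset.mem_filter.1 (hT hh)).2
          refine ⟨insert v T, Finset.insert_subset hv (hT.trans (hsub _)), ?_, ?_⟩
          · rw [Finset.card_insert_of_notMem hvT, hTc]
          · intro x hx y hy hxy
            rcases Finset.mem_insert.1 hx with rfl | hx' <;>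
              rcases Finset.mem_insert.1 hy with rfl | hy'
            · exact absurd rfl hxy
            · exact (Finset.mem_filter.1 (hT hy')).2
            · exact (Finset.mem_filter.1 (hT hx')).2.symm
            · exact hTa x hx' y hy' hxy
        · right
          exact ⟨T, hT.trans (hsub _), hTc, hTa⟩
      · have hc2 : R2 ≤ ((S.erase v).filter (fun w => ¬ F.Adj v w)).card := by omega
        rcases h2 N F _ hc2 with ⟨T, hT, hTc, hTa⟩ | ⟨T, hT, hTc, hTa⟩
        · left
          exact ⟨T, hT.trans (hsub _), hTc, hTa⟩
        · right
          have hvT : v ∉ T := fun hh => by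
            have := (Finset.mem_filter.1 (hT hh)).1
            simp at this
          refine ⟨insert v T, Finset.insert_subset hv (hT.trans (hsub _)), ?_, ?_⟩
          · rw [Finset.card_insert_of_notMem hvT, hTc]
          · intro x hx y hy
            rcases Finset.mem_insert.1 hx with rfl | hx' <;>
              rcases Finset.mem_insert.1 hy with rfl | hy'
            · exact F.irrefl
            · exact (Finset.mem_filter.1 (hT hy')).2
            · exact fun hh => (Finset.mem_filter.1 (hT hx')).2 hh.symm
            · exact hTa x hx' y hy'

lemma copy_of_clique {V W : Type*} [Fintype V] (G : SimpleGraph V) (F : SimpleGraph W)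
    (T : Finset W) (hT : T.card = Fintype.card V)
    (h : ∀ x ∈ T, ∀ y ∈ T, x ≠ y → F.Adj x y) : containsCopy F G := by
  have e : V ≃ T := Fintype.equivOfCardEq (by simp [hT])
  have hinj : Function.Injective (fun x => (e x : W)) :=
    Subtype.val_injective.comp e.injective
  exact ⟨⟨fun x => (e x : W), fun {a b} hab =>
    h _ (e a).2 _ (e b).2 (fun he => hab.ne (hinj he))⟩, hinj⟩

lemma copy_fan {W : Type*} (n t : ℕ) (H : SimpleGraph W) (f : Option (Fin n × Fin t) → W)
    (hf : Function.Injective f) (h1 : ∀ p, H.Adj (f none) (f (some p)))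
    (h2 : ∀ p q : Fin n × Fin t, p ≠ q → p.1 = q.1 → H.Adj (f (some p)) (f (some q))) :
    containsCopy H (genFan n t) := by
  refine ⟨⟨f, ?_⟩, hf⟩
  intro a b hab
  rw [genFan, SimpleGraph.fromRel_adj] at hab
  obtain ⟨hne, hab⟩ := hab
  have key : ∀ a b : Option (Fin n × Fin t), a ≠ b →
      (a = none ∨ ∃ p q : Fin n × Fin t, a = some p ∧ b = some q ∧ p.1 = q.1) →
      H.Adj (f a) (f b) := by
    intro a b hne hab
    rcases hab with rfl | ⟨p, q, rfl, rfl, hpq⟩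
    · rcases b with _ | q
      · exact absurd rfl hne
      · exact h1 q
    · exact h2 p q (fun he => hne (he ▸ rfl)) hpq
  rcases hab with hab | hab
  · exact key a b hne hab
  · exact (key b a hne.symm hab).symm

lemma copy_fan_of_indep {W : Type*} (n t : ℕ) (F : SimpleGraph W) (S : Finset W)
    (hS : n * t + 1 ≤ S.card) (h : ∀ x ∈ S, ∀ y ∈ S, ¬ F.Adj x y) :
    containsCopy Fᶜ (genFan n t) := by
  have : Nonempty (Option (Fin n × Fin t) ↪ S) := by
    apply Function.Embedding.nonempty_of_card_le
    simpa using hS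
  obtain ⟨e⟩ := this
  have hinj : Function.Injective (fun x => (e x : W)) :=
    Subtype.val_injective.comp e.injective
  refine copy_fan n t _ (fun x => (e x : W)) hinj ?_ ?_
  · intro p
    rw [SimpleGraph.compl_adj]
    exact ⟨fun he => by simpa using hinj he, h _ (e _).2 _ (e _).2⟩
  · intro p q hpq _
    rw [SimpleGraph.compl_adj]
    exact ⟨fun he => hpq (by simpa using hinj he), h _ (e _).2 _ (e _).2⟩

open Classical in
lemma packing {N t R : ℕ} (F : SimpleGraph (Fin N))
    (hR : ∀ S : Finset (Fin N), R ≤ S.card →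
      ∃ T ⊆ S, T.card = t ∧ ∀ x ∈ T, ∀ y ∈ T, ¬ F.Adj x y)
    (B : Finset (Fin N)) (n : ℕ) (hB : n * t + R ≤ B.card) :
    ∃ T : ℕ → Finset (Fin N), (∀ i < n, T i ⊆ B ∧ (T i).card = t ∧
      ∀ x ∈ T i, ∀ y ∈ T i, ¬ F.Adj x y) ∧ ∀ i < n, ∀ j < n, i ≠ j → Disjoint (T i) (T j) := by
  induction n with
  | zero => exact ⟨fun _ => ∅, by simp, by simp⟩
  | succ n ih =>
    obtain ⟨T, hT, hdis⟩ := ih (by rw [Nat.succ_mul] at hB; omega)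
    let U := (Finset.range n).biUnion T
    have hU : U.card ≤ n * t := by
      have := Finset.card_biUnion_le_card_mul (Finset.range n) T t
        (fun i hi => (hT i (Finset.mem_range.1 hi)).2.1.le)
      simpa using this
    have hBU : R ≤ (B \ U).card := by
      have := Finset.le_card_sdiff U B
      rw [Nat.succ_mul] at hB
      omega
    obtain ⟨X, hXs, hXc, hXa⟩ := hR _ hBU
    have hXdis : ∀ i < n, Disjoint (T i) X := by
      intro i hi
      rw [Finset.disjoint_left]
      intro x hx hxX
      exact (Finset.mem_sdiff.1 (hXs hxX)).2
        (Finset.mem_biUnion.2 ⟨i, Finset.mem_range.2 hi, hx⟩)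
    refine ⟨fun i => if i < n then T i else X, ?_, ?_⟩
    · intro i hi
      by_cases hin : i < n
      · simp only [hin, if_true]; exact hT i hin
      · simp only [hin, if_false]
        exact ⟨hXs.trans Finset.sdiff_subset, hXc, hXa⟩
    · intro i hi j hj hij
      by_cases hin : i < n <;> by_cases hjn : j < n <;> simp only [hin, hjn, if_true, if_false]
      · exact hdis i hin j hjn hij
      · exact hXdis i hin
      · exact (hXdis j hjn).symm
      · omega

open Classical in
lemma blue_degree {N t R n : ℕ} (F : SimpleGraph (Fin N))
    (hR : ∀ S : Finset (Fin N), R ≤ S.card →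
      ∃ T ⊆ S, T.card = t ∧ ∀ x ∈ T, ∀ y ∈ T, ¬ F.Adj x y)
    (hfan : ¬ containsCopy Fᶜ (genFan n t)) (v : Fin N) :
    (Finset.univ.filter (fun w => ¬ F.Adj v w)).card ≤ n * t + R := by
  by_contra! hlt
  apply hfan
  set B := (Finset.univ.filter (fun w => ¬ F.Adj v w)).erase v with hBdef
  have hB : n * t + R ≤ B.card := by
    have : (Finset.univ.filter (fun w => ¬ F.Adj v w)).card - 1 ≤ B.card :=
      Finset.pred_card_le_card_erase
    omega
  obtain ⟨T, hT, hdis⟩ := packing F hR B n hB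
  let g : Fin n × Fin t → Fin N := fun p =>
    (T p.1).orderEmbOfFin (hT p.1 p.1.2).2.1 p.2
  have hgT : ∀ p, g p ∈ T p.1 := fun p => Finset.orderEmbOfFin_mem _ _ _
  have hgB : ∀ p, g p ∈ B := fun p => (hT p.1 p.1.2).1 (hgT p)
  have hginj : ∀ p q, g p = g q → p = q := by
    rintro ⟨i, a⟩ ⟨j, b⟩ hpq
    by_cases hij : i = j
    · subst hij
      have := ((T i).orderEmbOfFin (hT i i.2).2.1).injective hpq
      exact Prod.ext rfl this
    · exfalso
      have h1 := hgT (i, a)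
      rw [hpq] at h1
      exact Finset.disjoint_left.1 (hdis i i.2 j j.2 (fun he => hij (Fin.ext he))) h1 (hgT (j, b))
  have hgv : ∀ p, v ≠ g p := fun p => (Finset.mem_erase.1 (hgB p)).1.symm
  refine copy_fan n t _ (fun o => o.elim v g) ?_ ?_ ?_
  · rintro (_ | p) (_ | q) hpq
    · rfl
    · exact absurd hpq (hgv q)
    · exact absurd hpq.symm (hgv p)
    · exact congrArg some (hginj p q hpq)
  · intro p
    rw [SimpleGraph.compl_adj]
    exact ⟨hgv p, (Finset.mem_filter.1 (Finset.mem_erase.1 (hgB p)).2).2⟩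
  · intro p q hpq h1
    rw [SimpleGraph.compl_adj]
    refine ⟨fun he => hpq (hginj p q he), ?_⟩
    have hq := hgT q
    rw [← h1] at hq
    exact (hT p.1 p.1.2).2.2 _ (hgT p) _ hq

lemma exists_crit {V : Type*} (G : SimpleGraph V) (k : ℕ)
    (hchi : G.chromaticNumber = (k + 1 : ℕ)) (hcrit : EdgeCritical G) :
    ∃ u v c, Crit G k u v c := by
  obtain ⟨u, v, huv, hc⟩ := hcrit
  have hnot : ¬ G.Colorable k := by
    intro hcol
    have := SimpleGraph.chromaticNumber_le_iff_colorable.2 hcol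
    rw [hchi] at this
    have : k + 1 ≤ k := by exact_mod_cast this
    omega
  have hk : (G.deleteEdges {s(u, v)}).chromaticNumber ≤ (k : ℕ) := by
    rw [hchi, Nat.cast_add, Nat.cast_one] at hc
    exact (ENat.add_le_add_iff_right ENat.one_ne_top).1 hc.le
  obtain ⟨c⟩ := SimpleGraph.chromaticNumber_le_iff_colorable.1 hk
  have hproper : ∀ x y, G.Adj x y → s(x, y) ≠ s(u, v) → c x ≠ c y := by
    intro x y hxy hne
    apply c.valid
    rw [SimpleGraph.deleteEdges_adj]
    exact ⟨hxy, by simpa using hne⟩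
  refine ⟨u, v, c, huv, ?_, hproper⟩
  by_contra hne
  apply hnot
  refine ⟨SimpleGraph.Coloring.mk c ?_⟩
  intro x y hxy
  by_cases he : s(x, y) = s(u, v)
  · rcases Sym2.eq_iff.1 he with ⟨rfl, rfl⟩ | ⟨rfl, rfl⟩
    · exact hne
    · exact fun h => hne h.symm
  · exact hproper x y hxy he

lemma lower_bound {V : Type*} (G : SimpleGraph V) (k n t N : ℕ) (hnt : 0 < n * t)
    (hG : ¬ G.Colorable k) (hN : N ≤ k * n * t) : ¬ arrows N G (genFan n t) := by
  intro harr
  let R : SimpleGraph (Fin N) :=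
    { Adj := fun a b => (a : ℕ) / (n * t) ≠ (b : ℕ) / (n * t)
      symm := ⟨fun a b h => h.symm⟩
      loopless := ⟨fun a h => h rfl⟩ }
  rcases harr R with ⟨f, -⟩ | ⟨f, hf⟩
  · apply hG
    refine ⟨SimpleGraph.Coloring.mk (fun x => (⟨(f x : ℕ) / (n * t), ?_⟩ : Fin k)) ?_⟩
    · rw [Nat.div_lt_iff_lt_mul hnt, ← mul_assoc]
      exact lt_of_lt_of_le (f x).2 hN
    · intro x y hxy he
      exact f.map_adj hxy (by simpa using he)
  · have hq : ∀ x, (f x : ℕ) / (n * t) = (f none : ℕ) / (n * t) := by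
      rintro (_ | p)
      · rfl
      · have hadj : (genFan n t).Adj none (some p) := by
          rw [genFan, SimpleGraph.fromRel_adj]
          exact ⟨by simp, Or.inl (Or.inl rfl)⟩
        have h1 := f.map_adj hadj
        rw [SimpleGraph.compl_adj] at h1
        by_contra hne
        exact h1.2 (fun he => hne he.symm)
    have hinj : Function.Injective
        (fun x => (⟨(f x : ℕ) % (n * t), Nat.mod_lt _ hnt⟩ : Fin (n * t))) := by
      intro x y hxy
      apply hf
      apply Fin.ext
      have h1 : (f x : ℕ) % (n * t) = (f y : ℕ) % (n * t) := by simpa using hxy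
      rw [← Nat.div_add_mod (f x : ℕ) (n * t), ← Nat.div_add_mod (f y : ℕ) (n * t), h1, hq x, hq y]
    have := Fintype.card_le_of_injective _ hinj
    simp at this

theorem statement_0 (k t : ℕ) (hk : 2 ≤ k) (ht : 2 ≤ t)
    {V : Type*} [Fintype V] (G : SimpleGraph V)
    (hchi : G.chromaticNumber = (k + 1 : ℕ)) (hcrit : EdgeCritical G) :
    ∃ n₀ : ℕ, ∀ n : ℕ, n₀ ≤ n → ramseyNumber G (genFan n t) = k * n * t + 1 := by
  classical
  obtain ⟨u, v, c, h⟩ := exists_crit G k hchi hcrit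
  have hnot : ¬ G.Colorable k := by
    intro hcol
    have := SimpleGraph.chromaticNumber_le_iff_colorable.2 hcol
    rw [hchi] at this
    have : k + 1 ≤ k := by exact_mod_cast this
    omega
  obtain ⟨R, hR⟩ := ramsey_aux (Fintype.card V) t
  obtain ⟨N0, hN0⟩ := colorable_of_deg h hk (k * R)
  refine ⟨N0 + 1, fun n hn => ?_⟩
  have hnt : n ≤ n * t := Nat.le_mul_of_pos_right _ (by omega)
  have hknt : n * t ≤ k * n * t := by
    rw [mul_assoc]
    exact Nat.le_mul_of_pos_left _ (by omega)
  refine IsLeast.csInf_eq ⟨⟨by omega, ?_⟩, ?_⟩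
  · intro F
    by_contra! hcon
    obtain ⟨hFG, hFfan⟩ := hcon
    have hR' : ∀ S : Finset (Fin (k * n * t + 1)), R ≤ S.card →
        ∃ T ⊆ S, T.card = t ∧ ∀ x ∈ T, ∀ y ∈ T, ¬ F.Adj x y := by
      intro S hS
      rcases hR _ F S hS with ⟨T, -, hTc, hTa⟩ | hh
      · exact absurd (copy_of_clique G F T hTc hTa) hFG
      · exact hh
    obtain ⟨c', hc'⟩ := hN0 (k * n * t + 1) (by omega) F hFG (by
      intro w
      have h1 := Nat.mul_le_mul_left k (blue_degree F hR' hFfan w)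
      rw [mul_add, ← mul_assoc] at h1
      convert h1.trans (by omega : k * n * t + k * R ≤ k * n * t + 1 + k * R) using 3)
    have hcard : Fintype.card (Fin k) * (n * t) < Fintype.card (Fin (k * n * t + 1)) := by
      simp [mul_assoc]
    obtain ⟨i, hi⟩ := Fintype.exists_lt_card_fiber_of_mul_lt_card c' hcard
    apply hFfan
    refine copy_fan_of_indep n t F (Finset.univ.filter (fun x => c' x = i)) hi ?_
    intro x hx y hy
    exact hc' x y ((Finset.mem_filter.1 hx).2.trans (Finset.mem_filter.1 hy).2.symm)
  · rintro N ⟨-, hN⟩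
    by_contra! hlt
    exact lower_bound G k n t N (by omega) hnot (by omega) hN
end

section
/- Let k ≥ 2 and t ≥ 2 be integers and let G be a fixed edge-critical graph with chromatic number χ(G) = k + 1. Then there exists n₀ such that for all integers n ≥ n₀, every 2-coloring of the edges of the complete graph on k·n·t + 1 vertices with colors red and blue contains either a red copy of G or a blue copy of K₁ + nK_t. -/
open SimpleGraph

open Finset in
theorem aux_ramsey (a b : ℕ) : ∃ r : ℕ, ∀ (N : ℕ) (R : SimpleGraph (Fin N)) (S : Finset (Fin N)),
    r ≤ #S → (∃ T ⊆ S, #T = a ∧ ∀ x ∈ T, ∀ y ∈ T, x ≠ y → R.Adj x y) ∨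
      (∃ T ⊆ S, #T = b ∧ ∀ x ∈ T, ∀ y ∈ T, x ≠ y → ¬ R.Adj x y) := by
  classical
  induction a generalizing b with
  | zero => exact ⟨0, fun N R S _ => Or.inl ⟨∅, by simp⟩⟩
  | succ a iha =>
    induction b with
    | zero => exact ⟨0, fun N R S _ => Or.inr ⟨∅, by simp⟩⟩
    | succ b ihb =>
      obtain ⟨r1, h1⟩ := iha (b + 1)
      obtain ⟨r2, h2⟩ := ihb
      refine ⟨r1 + r2 + 1, fun N R S hS => ?_⟩
      obtain ⟨v, hv⟩ : S.Nonempty := by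
        rw [← Finset.card_pos]; omega
      have hsplit := Finset.card_filter_add_card_filter_not (s := S.erase v) (fun w => R.Adj v w)
      rw [Finset.card_erase_of_mem hv] at hsplit
      by_cases hc : r1 ≤ #{w ∈ S.erase v | R.Adj v w}
      · rcases h1 N R _ hc with ⟨T, hT, hTc, hTa⟩ | ⟨T, hT, hTc, hTa⟩
        · left
          have hvT : v ∉ T := fun h => by simpa using hT h
          refine ⟨insert v T, ?_, by simp [hvT, hTc], ?_⟩
          · intro x hx
            rcases Finset.mem_insert.1 hx with rfl | hx
            · exact hv
            · have := hT hx; simp at this; tauto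
          · intro x hx y hy hxy
            rcases Finset.mem_insert.1 hx with rfl | hx' <;>
              rcases Finset.mem_insert.1 hy with rfl | hy'
            · exact absurd rfl hxy
            · have := hT hy'; simp at this; tauto
            · have := hT hx'; simp at this; exact this.2.symm
            · exact hTa x hx' y hy' hxy
        · right
          refine ⟨T, fun x hx => ?_, hTc, hTa⟩
          have := hT hx; simp at this; tauto
      · have hc2 : r2 ≤ #{w ∈ S.erase v | ¬ R.Adj v w} := by omega
        rcases h2 N R _ hc2 with ⟨T, hT, hTc, hTa⟩ | ⟨T, hT, hTc, hTa⟩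
        · left
          refine ⟨T, fun x hx => ?_, hTc, hTa⟩
          have := hT hx; simp at this; tauto
        · right
          have hvT : v ∉ T := fun h => by simpa using hT h
          refine ⟨insert v T, ?_, by simp [hvT, hTc], ?_⟩
          · intro x hx
            rcases Finset.mem_insert.1 hx with rfl | hx
            · exact hv
            · have := hT hx; simp at this; tauto
          · intro x hx y hy hxy
            rcases Finset.mem_insert.1 hx with rfl | hx' <;>
              rcases Finset.mem_insert.1 hy with rfl | hy'
            · exact absurd rfl hxy
            · have := hT hy'; simp at this; tauto
            · have := hT hx'; simp at this; exact fun h => this.2 h.symm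
            · exact hTa x hx' y hy' hxy

open Finset in
/-- If every large set contains a blue `K_t`, then large sets contain `n` disjoint ones. -/
theorem aux_many {N : ℕ} (R : SimpleGraph (Fin N)) (r t : ℕ)
    (h : ∀ S : Finset (Fin N), r ≤ #S →
      ∃ T ⊆ S, #T = t ∧ ∀ x ∈ T, ∀ y ∈ T, x ≠ y → ¬ R.Adj x y) (n : ℕ) :
    ∀ S : Finset (Fin N), n * t + r ≤ #S →
      ∃ g : Fin n × Fin t → Fin N, Function.Injective g ∧ (∀ p, g p ∈ S) ∧
        ∀ p q, p.1 = q.1 → p ≠ q → ¬ R.Adj (g p) (g q) := by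
  classical
  induction n with
  | zero => exact fun S _ => ⟨fun p => p.1.elim0, fun p => p.1.elim0, fun p => p.1.elim0,
      fun p => p.1.elim0⟩
  | succ n ih =>
    intro S hS
    obtain ⟨T, hTS, hTc, hT⟩ := h S (le_trans (Nat.le_add_left _ _) hS)
    obtain ⟨g, hg, hgS, hga⟩ := ih (S \ T) (by
      rw [Finset.card_sdiff_of_subset hTS, hTc]
      rw [Nat.add_mul] at hS
      omega)
    let φ := T.orderEmbOfFin hTc
    have hφ : ∀ i, φ i ∈ T := fun i => T.orderEmbOfFin_mem hTc i
    have hgT : ∀ p, g p ∉ T := fun p => (Finset.mem_sdiff.1 (hgS p)).2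
    refine ⟨fun p => Fin.cases (φ p.2) (fun i => g (i, p.2)) p.1, ?_, ?_, ?_⟩
    · rintro ⟨i, a⟩ ⟨j, b⟩ hab
      induction i using Fin.cases <;> induction j using Fin.cases <;> simp at hab
      · simp [hab]
      · exact absurd (hab ▸ hφ a) (hgT _)
      · exact absurd (hab ▸ hφ b) (hgT _)
      · have := hg hab
        simp at this
        simp [this]
    · rintro ⟨i, a⟩
      induction i using Fin.cases
      · exact hTS (hφ a)
      · exact (Finset.mem_sdiff.1 (hgS _)).1
    · rintro ⟨i, a⟩ ⟨j, b⟩ hij hne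
      dsimp only at hij
      subst hij
      induction i using Fin.cases
      · refine hT _ (hφ _) _ (hφ _) ?_
        intro h
        apply hne
        simpa using h
      · refine hga _ _ rfl ?_
        intro h
        apply hne
        simpa using h

/-- A blue fan from disjoint blue cliques in the blue neighbourhood of `v`. -/
theorem aux_fan {N n t : ℕ} (R : SimpleGraph (Fin N)) (v : Fin N) (g : Fin n × Fin t → Fin N)
    (hg : Function.Injective g) (hv : ∀ p, g p ≠ v ∧ ¬ R.Adj v (g p))
    (hb : ∀ p q, p.1 = q.1 → p ≠ q → ¬ R.Adj (g p) (g q)) :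
    containsCopy Rᶜ (genFan n t) := by
  refine ⟨⟨fun o => o.elim v g, ?_⟩, ?_⟩
  · intro a b hab
    rw [genFan, SimpleGraph.fromRel_adj] at hab
    obtain ⟨hne, hab⟩ := hab
    rw [SimpleGraph.compl_adj]
    cases a with
    | none =>
      cases b with
      | none => exact absurd rfl hne
      | some q => exact ⟨(hv q).1.symm, (hv q).2⟩
    | some p =>
      cases b with
      | none => exact ⟨(hv p).1, fun h => (hv p).2 h.symm⟩
      | some q =>
        have hpq : p ≠ q := fun h => hne (by rw [h])
        refine ⟨fun h => hpq (hg h), hb p q ?_ hpq⟩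
        simp at hab
        rcases hab with h | h <;> simp [h]
  · intro a b hab
    cases a <;> cases b <;> simp at hab
    · rfl
    · exact absurd hab.symm (hv _).1
    · exact absurd hab (hv _).1
    · rw [hg hab]

open Finset in
/-- Each vertex has few non-neighbours. -/
theorem aux_nonnbr {V : Type*} [Fintype V] (G : SimpleGraph V) (t : ℕ) :
    ∃ C : ℕ, ∀ (N n : ℕ) (R : SimpleGraph (Fin N)) [DecidableRel R.Adj], ¬ containsCopy R G →
      ¬ containsCopy Rᶜ (genFan n t) → ∀ v, #{w | ¬ R.Adj v w} ≤ n * t + C := by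
  classical
  obtain ⟨r, hr⟩ := aux_ramsey (Fintype.card V) t
  refine ⟨r, fun N n R _ hG hF v => ?_⟩
  by_contra! hlt
  have hmany := aux_many R r t (fun S hS => by
    rcases hr N R S hS with ⟨T, hT, hTc, hTa⟩ | h
    · exfalso
      apply hG
      have e : V ≃ T := Fintype.equivOfCardEq (by simp [hTc])
      refine ⟨⟨fun w => (e w : Fin N), ?_⟩, ?_⟩
      · intro a b hab
        refine hTa _ (e a).2 _ (e b).2 ?_
        intro h
        exact hab.ne (e.injective (Subtype.ext h))
      · intro a b h
        exact e.injective (Subtype.ext h)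
    · exact h) n (({w | ¬ R.Adj v w} : Finset (Fin N)).erase v) (by
      rw [Finset.card_erase_of_mem (by simp)]; omega)
  obtain ⟨g, hg, hgS, hga⟩ := hmany
  refine hF (aux_fan R v g hg (fun p => ?_) hga)
  have := hgS p
  simpa using this

open Finset in
/-- If `R` is `k`-colorable there is a big blue clique, hence a blue fan. -/
theorem aux_colorable {k n t : ℕ} (R : SimpleGraph (Fin (k * n * t + 1))) (h : R.Colorable k) :
    containsCopy Rᶜ (genFan n t) := by
  classical
  obtain ⟨c⟩ := h
  obtain ⟨i, hi⟩ := Fintype.exists_lt_card_fiber_of_mul_lt_card (f := c) (n := n * t) (by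
    simp only [Fintype.card_fin]
    rw [← mul_assoc]; omega)
  have hcard : Fintype.card (Option (Fin n × Fin t)) ≤ Fintype.card
      ({x | c x = i} : Finset (Fin (k * n * t + 1))) := by
    simp only [Fintype.card_option, Fintype.card_prod, Fintype.card_fin, Fintype.card_coe]
    omega
  obtain ⟨φ⟩ := Function.Embedding.nonempty_of_card_le hcard
  have hφ : ∀ a, c (φ a) = i := fun a => (Finset.mem_filter.1 (φ a).2).2
  refine ⟨⟨fun a => (φ a : Fin _), ?_⟩, ?_⟩
  · intro a b hab
    rw [SimpleGraph.compl_adj]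
    refine ⟨fun h => hab.ne (φ.injective (Subtype.ext h)), fun h => ?_⟩
    exact c.valid h ((hφ a).trans (hφ b).symm)
  · intro a b h
    exact φ.injective (Subtype.ext h)

/-- The family of sets `T` is pairwise completely joined in `R`. -/
def auxJoined {W : Type*} (R : SimpleGraph W) {k : ℕ} (T : Fin k → Finset W) : Prop :=
  ∀ i j, i ≠ j → ∀ a ∈ T i, ∀ b ∈ T j, R.Adj a b

/-- `R` contains no complete `k`-partite graph with parts of size `m` plus an edge. -/
def auxFree {W : Type*} (R : SimpleGraph W) (k m : ℕ) : Prop :=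
  ∀ (T : Fin k → Finset W) (i : Fin k) (x y : W), (∀ j, m ≤ (T j).card) → auxJoined R T →
    R.Adj x y → (∀ j, j ≠ i → ∀ a ∈ T j, R.Adj x a ∧ R.Adj y a) → False

open Finset in
theorem aux_embed {V W : Type*} [Fintype V] (G : SimpleGraph V) (R : SimpleGraph W) (k : ℕ)
    (u v : V) (huv : G.Adj u v) (hc : (G.deleteEdges {s(u, v)}).Colorable k)
    (hn : ¬ G.Colorable k) (hR : ¬ containsCopy R G) : auxFree R k (Fintype.card V + 2) := by
  classical
  intro T i x y hT hJ hxy hadj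
  obtain ⟨c0⟩ := hc
  have hdel : ∀ a b, G.Adj a b → s(a, b) ≠ s(u, v) → c0 a ≠ c0 b := by
    intro a b hab hne
    apply c0.valid
    rw [SimpleGraph.deleteEdges_adj]
    exact ⟨hab, by simpa using hne⟩
  have huv0 : c0 u = c0 v := by
    by_contra hne
    apply hn
    refine ⟨SimpleGraph.Coloring.mk c0 ?_⟩
    intro a b hab
    by_cases hs : s(a, b) = s(u, v)
    · rw [Sym2.eq_iff] at hs
      rcases hs with ⟨rfl, rfl⟩ | ⟨rfl, rfl⟩
      · exact hne
      · exact fun h => hne h.symm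
    · exact hdel a b hab hs
  let c : V → Fin k := fun a => Equiv.swap (c0 u) i (c0 a)
  have hcu : c u = i := by simp [c]
  have hcv : c v = i := by simp [c, ← huv0]
  have hcd : ∀ a b, G.Adj a b → s(a, b) ≠ s(u, v) → c a ≠ c b := by
    intro a b hab hne h
    exact hdel a b hab hne ((Equiv.swap (c0 u) i).injective h)
  have hemb : ∀ j, Nonempty (V ↪ ((T j).erase x).erase y) := by
    intro j
    apply Function.Embedding.nonempty_of_card_le
    rw [Fintype.card_coe]
    have h1 := Finset.pred_card_le_card_erase (s := T j) (a := x)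
    have h2 := Finset.pred_card_le_card_erase (s := (T j).erase x) (a := y)
    have := hT j
    omega
  let φ : ∀ j, V ↪ ((T j).erase x).erase y := fun j => (hemb j).some
  let ψ : V → W := fun w => (φ (c w) w : W)
  have hψT : ∀ w, ψ w ∈ T (c w) := fun w =>
    Finset.mem_of_mem_erase (Finset.mem_of_mem_erase (φ (c w) w).2)
  have hψy : ∀ w, ψ w ≠ y := fun w => Finset.ne_of_mem_erase (φ (c w) w).2
  have hψx : ∀ w, ψ w ≠ x := fun w =>
    Finset.ne_of_mem_erase (Finset.mem_of_mem_erase (φ (c w) w).2)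
  have hψi : ∀ a b, ψ a = ψ b → a = b := by
    intro a b hab
    by_cases h : c a = c b
    · have h3 : φ (c b) a = φ (c b) b := by
        apply Subtype.ext
        have : ψ a = (φ (c b) a : W) := by rw [← h]
        rw [← this, hab]
      exact (φ (c b)).injective h3
    · exact absurd hab (hJ _ _ h _ (hψT a) _ (hψT b)).ne
  have hux : ∀ w, G.Adj u w → w ≠ v → R.Adj x (ψ w) := by
    intro w hw hwv
    refine (hadj (c w) ?_ _ (hψT w)).1
    rw [← hcu]
    refine (hcd u w hw ?_).symm
    intro h
    rw [Sym2.eq_iff] at h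
    rcases h with ⟨_, h⟩ | ⟨h, _⟩
    · exact hwv h
    · exact huv.ne h
  have hvy : ∀ w, G.Adj v w → w ≠ u → R.Adj y (ψ w) := by
    intro w hw hwu
    refine (hadj (c w) ?_ _ (hψT w)).2
    rw [← hcv]
    refine (hcd v w hw ?_).symm
    intro h
    rw [Sym2.eq_iff] at h
    rcases h with ⟨h, _⟩ | ⟨_, h⟩
    · exact huv.ne h.symm
    · exact hwu h
  apply hR
  refine ⟨⟨fun w => if w = u then x else if w = v then y else ψ w, ?_⟩, ?_⟩
  · intro a b hab
    by_cases hau : a = u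
    · subst hau
      rw [if_pos rfl, if_neg hab.ne.symm]
      by_cases hbv : b = v
      · rw [if_pos hbv]; exact hxy
      · rw [if_neg hbv]; exact hux b hab hbv
    rw [if_neg hau]
    by_cases hbu : b = u
    · subst hbu
      rw [if_pos rfl]
      by_cases hav : a = v
      · rw [if_pos hav]; exact hxy.symm
      · rw [if_neg hav]; exact (hux a hab.symm hav).symm
    rw [if_neg hbu]
    by_cases hav : a = v
    · subst hav
      rw [if_pos rfl, if_neg hab.ne.symm]
      exact hvy b hab hbu
    rw [if_neg hav]
    by_cases hbv : b = v
    · subst hbv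
      rw [if_pos rfl]
      exact (hvy a hab.symm hau).symm
    rw [if_neg hbv]
    refine hJ _ _ (hcd a b hab ?_) _ (hψT a) _ (hψT b)
    intro h
    rw [Sym2.eq_iff] at h
    tauto
  · intro a b hab
    have hxy' := hxy.ne
    have hax := hψx a
    have hay := hψy a
    have hbx := hψx b
    have hby := hψy b
    have hi := hψi a b
    simp only [RelHom.coeFn_mk] at hab
    grind

open Finset in
theorem aux_greedy {W : Type*} [Fintype W] (R : SimpleGraph W) [DecidableRel R.Adj] {k m e : ℕ}
    (A S : Fin k → Finset W) (hS : ∀ i, S i ⊆ A i)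
    (hmiss : ∀ i j, i ≠ j → ∀ x ∈ A i, #{w ∈ A j | ¬ R.Adj x w} ≤ e)
    (hcard : ∀ i, k * m * e + m ≤ #(S i)) :
    ∃ T : Fin k → Finset W, (∀ i, T i ⊆ S i) ∧ (∀ i, #(T i) = m) ∧ auxJoined R T := by
  classical
  suffices h : ∀ I : Finset (Fin k), ∃ T : Fin k → Finset W, (∀ i ∈ I, T i ⊆ S i) ∧
      (∀ i ∈ I, #(T i) = m) ∧
      ∀ i ∈ I, ∀ j ∈ I, i ≠ j → ∀ a ∈ T i, ∀ b ∈ T j, R.Adj a b by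
    obtain ⟨T, h1, h2, h3⟩ := h univ
    exact ⟨T, fun i => h1 i (mem_univ _), fun i => h2 i (mem_univ _),
      fun i j => h3 i (mem_univ _) j (mem_univ _)⟩
  intro I
  induction I using Finset.induction_on with
  | empty => exact ⟨fun _ => ∅, by simp, by simp, by simp⟩
  | insert i I hi ih =>
    obtain ⟨T, h1, h2, h3⟩ := ih
    let bad : Finset W := I.biUnion fun j => (T j).biUnion fun a => {w ∈ A i | ¬ R.Adj a w}
    have hbad : #bad ≤ k * m * e := by
      have hb : #bad ≤ #I * (m * e) := by
        refine Finset.card_biUnion_le_card_mul _ _ _ fun j hj => ?_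
        rw [← h2 j hj]
        refine Finset.card_biUnion_le_card_mul _ _ _ fun a ha => ?_
        refine hmiss j i (fun h => hi (h ▸ hj)) a (hS j (h1 j hj ha))
      have hI : #I ≤ k := by simpa using Finset.card_le_univ I
      calc #bad ≤ #I * (m * e) := hb
        _ ≤ k * (m * e) := Nat.mul_le_mul_right _ hI
        _ = k * m * e := (mul_assoc _ _ _).symm
    have hsd : m ≤ #(S i \ bad) := by
      have := Finset.le_card_sdiff bad (S i)
      have := hcard i
      omega
    obtain ⟨T0, hT0, hT0c⟩ := Finset.exists_subset_card_eq hsd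
    have key : ∀ j ∈ I, ∀ a ∈ T j, ∀ b ∈ T0, R.Adj a b := by
      intro j hj a ha b hb
      by_contra hab
      have := Finset.mem_sdiff.1 (hT0 hb)
      apply this.2
      simp only [bad, mem_biUnion, mem_filter]
      exact ⟨j, hj, a, ha, hS i this.1, hab⟩
    have hne : ∀ j ∈ I, j ≠ i := fun j hj h => hi (h ▸ hj)
    refine ⟨Function.update T i T0, ?_, ?_, ?_⟩
    · intro j hj
      rcases Finset.mem_insert.1 hj with rfl | hj
      · rw [Function.update_self]; exact hT0.trans Finset.sdiff_subset
      · rw [Function.update_of_ne (hne j hj)]; exact h1 j hj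
    · intro j hj
      rcases Finset.mem_insert.1 hj with rfl | hj
      · rw [Function.update_self]; exact hT0c
      · rw [Function.update_of_ne (hne j hj)]; exact h2 j hj
    · intro j hj l hl hjl a ha b hb
      rcases Finset.mem_insert.1 hj with hj' | hj'
      · subst hj'
        rcases Finset.mem_insert.1 hl with rfl | hl
        · exact absurd rfl hjl
        · rw [Function.update_self] at ha
          rw [Function.update_of_ne (hne l hl)] at hb
          exact (key l hl b hb a ha).symm
      · rw [Function.update_of_ne (hne j hj')] at ha
        rcases Finset.mem_insert.1 hl with hl | hl
        · subst hl
          rw [Function.update_self] at hb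
          exact key j hj' a ha b hb
        · rw [Function.update_of_ne (hne l hl)] at hb
          exact h3 j hj' l hl hjl a ha b hb

open Finset in
theorem aux_vertex {W : Type*} [Fintype W] (R : SimpleGraph W) {k m : ℕ}
    (hk : 0 < k) (hm : 0 < m) (hfree : auxFree R k m) (T : Fin k → Finset W)
    (hT : ∀ i, m ≤ #(T i)) (hJ : auxJoined R T) (v : W) (hv : ∀ i, ∀ a ∈ T i, R.Adj v a) :
    False := by
  obtain ⟨y, hy⟩ : (T ⟨0, hk⟩).Nonempty := by
    rw [← Finset.card_pos]; exact lt_of_lt_of_le hm (hT _)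
  exact hfree T ⟨0, hk⟩ v y hT hJ (hv _ y hy)
    (fun j hj a ha => ⟨hv j a ha, hJ _ _ hj.symm y hy a ha⟩)

open Finset in
theorem aux_stage1 {W : Type*} [Fintype W] (R : SimpleGraph W) [DecidableRel R.Adj]
    {k m q L C : ℕ}
    (hk : 0 < k) (hm : 0 < m) (hfree : auxFree R k m)
    (hL : k * L ≤ Fintype.card W) (hnon : ∀ v, #{w | ¬ R.Adj v w} ≤ L + C)
    (A : Fin k → Finset W) (hA : ∀ i, #(A i) = 2 * q + m) (hJ : auxJoined R A) :
    ∃ B : Fin k → Finset W, (∀ i j, i ≠ j → Disjoint (B i) (B j)) ∧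
      (∀ i, ∀ x ∈ B i, ∀ y ∈ B i, ¬ R.Adj x y) ∧
      ∃ bad : Finset W, (∀ v, v ∈ bad ∨ ∃ i, v ∈ B i) ∧
        q * #bad ≤ k * m * L + k * (2 * q + m) * C := by
  classical
  let d : W → Fin k → ℕ := fun v i => #{w ∈ A i | ¬ R.Adj v w}
  have hd : ∀ v i, #{w ∈ A i | R.Adj v w} + d v i = 2 * q + m := fun v i => by
    rw [← hA i]; exact Finset.card_filter_add_card_filter_not _
  have hsome : ∀ v, ∃ i, 2 * q ≤ d v i := by
    intro v
    by_contra! hcon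
    refine aux_vertex R hk hm hfree (fun i => {w ∈ A i | R.Adj v w}) (fun i => ?_) ?_ v ?_
    · have := hd v i; have := hcon i; omega
    · intro i j hij a ha b hb
      exact hJ i j hij a (Finset.mem_filter.1 ha).1 b (Finset.mem_filter.1 hb).1
    · intro i a ha
      exact (Finset.mem_filter.1 ha).2
  let B : Fin k → Finset W := fun i => {v | 2 * q ≤ d v i ∧ ∀ j, j ≠ i → d v j < q}
  have hB : ∀ i v, v ∈ B i ↔ 2 * q ≤ d v i ∧ ∀ j, j ≠ i → d v j < q := fun i v => by simp [B]
  let bad : Finset W := {v | ∀ i, v ∉ B i}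
  refine ⟨B, ?_, ?_, bad, ?_, ?_⟩
  · intro i j hij
    rw [Finset.disjoint_left]
    intro v h1 h2
    rw [hB] at h1 h2
    have := h2.2 i hij
    omega
  · intro i x hx y hy hxy
    rw [hB] at hx hy
    refine hfree (fun j => if j = i then A i else {w ∈ A j | R.Adj x w ∧ R.Adj y w}) i x y
      (fun j => ?_) ?_ hxy ?_
    · split_ifs with h
      · rw [hA]; omega
      · have h1 := hx.2 j h
        have h2 := hy.2 j h
        have h3 : #(A j) ≤ #{w ∈ A j | R.Adj x w ∧ R.Adj y w} + (d x j + d y j) := by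
          calc #(A j) ≤ #({w ∈ A j | R.Adj x w ∧ R.Adj y w} ∪
                ({w ∈ A j | ¬ R.Adj x w} ∪ {w ∈ A j | ¬ R.Adj y w})) := by
                apply Finset.card_le_card
                intro w hw
                simp only [mem_union, mem_filter, hw, true_and]
                tauto
            _ ≤ _ := (Finset.card_union_le _ _).trans
                (Nat.add_le_add_left (Finset.card_union_le _ _) _)
        rw [hA] at h3
        omega
    · intro j l hjl a ha b hb
      refine hJ j l hjl a ?_ b ?_
      · dsimp only at ha
        split_ifs at ha with h
        · rw [h]; exact ha
        · exact (Finset.mem_filter.1 ha).1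
      · dsimp only at hb
        split_ifs at hb with h
        · rw [h]; exact hb
        · exact (Finset.mem_filter.1 hb).1
    · intro j hj a ha
      rw [if_neg hj] at ha
      exact (Finset.mem_filter.1 ha).2
  · intro v
    by_cases h : ∃ i, v ∈ B i
    · exact Or.inr h
    · left; simpa [bad] using h
  · have hup : ∑ v, ∑ i, d v i ≤ k * ((2 * q + m) * (L + C)) := by
      rw [Finset.sum_comm]
      have : ∀ i ∈ (univ : Finset (Fin k)), ∑ v, d v i ≤ (2 * q + m) * (L + C) := by
        intro i _
        have hdc := Finset.sum_card_bipartiteAbove_eq_sum_card_bipartiteBelow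
          (s := (univ : Finset W)) (t := A i) (fun v w => ¬ R.Adj v w)
        have : ∑ v, d v i = ∑ w ∈ A i, #{v | ¬ R.Adj v w} := hdc
        rw [this, ← hA i]
        refine Finset.sum_le_card_nsmul _ _ _ fun w _ => ?_
        refine le_trans (le_of_eq ?_) (hnon w)
        congr 1
        ext v
        simp [R.adj_comm]
      have h2 := Finset.sum_le_card_nsmul _ _ _ this
      simpa using h2
    have hlow : ∀ v, 2 * q + (if v ∈ bad then q else 0) ≤ ∑ i, d v i := by
      intro v
      obtain ⟨i, hi⟩ := hsome v
      split_ifs with hv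
      · have hvB : v ∉ B i := by
          have : ∀ i, v ∉ B i := by simpa [bad] using hv
          exact this i
        rw [hB] at hvB
        push Not at hvB
        obtain ⟨j, hj, hjq⟩ := hvB hi
        have : d v i + d v j ≤ ∑ i, d v i := by
          rw [← Finset.sum_pair hj.symm]
          exact Finset.sum_le_sum_of_subset (Finset.subset_univ _)
        omega
      · have := Finset.single_le_sum (f := d v) (fun _ _ => Nat.zero_le _) (Finset.mem_univ i)
        omega
    have hsum := Finset.sum_le_sum fun v (_ : v ∈ (univ : Finset W)) => hlow v
    rw [Finset.sum_add_distrib, Finset.sum_ite_mem, Finset.univ_inter] at hsum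
    simp only [Finset.sum_const, smul_eq_mul, Finset.card_univ] at hsum
    have := Nat.mul_le_mul_right (2 * q) hL
    nlinarith

open Finset in
theorem aux_stage2 {W : Type*} [Fintype W] (R : SimpleGraph W) [DecidableRel R.Adj]
    {k m b L C : ℕ}
    (hk : 0 < k) (hm : 0 < m) (hfree : auxFree R k m)
    (hL : k * L ≤ Fintype.card W) (hnon : ∀ v, #{w | ¬ R.Adj v w} ≤ L + C)
    (B : Fin k → Finset W) (hdisj : ∀ i j, i ≠ j → Disjoint (B i) (B j))
    (hind : ∀ i, ∀ x ∈ B i, ∀ y ∈ B i, ¬ R.Adj x y)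
    (bad : Finset W) (hbad : ∀ v, v ∈ bad ∨ ∃ i, v ∈ B i) (hb : #bad ≤ b)
    (hbig : 3 * ((b + k * C) + k * m * (b + k * C) + m) ≤ L) : R.Colorable k := by
  classical
  obtain ⟨e, he⟩ : ∃ e, e = b + k * C := ⟨_, rfl⟩
  rw [← he] at hbig
  have hBu : ∀ i, #(B i) ≤ L + C := by
    intro i
    rcases (B i).eq_empty_or_nonempty with h | ⟨x, hx⟩
    · simp [h]
    · refine le_trans (Finset.card_le_card ?_) (hnon x)
      intro w hw
      simpa using hind i x hx w hw
  have hBl : ∀ i, L + C ≤ #(B i) + e := by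
    intro i
    have h1 : Fintype.card W ≤ #bad + ∑ j, #(B j) := by
      rw [← Finset.card_univ]
      refine le_trans (Finset.card_le_card (t := bad ∪ univ.biUnion B) ?_)
        ((Finset.card_union_le _ _).trans (Nat.add_le_add_left Finset.card_biUnion_le _))
      intro v _
      simpa using hbad v
    rw [← Finset.add_sum_erase _ _ (Finset.mem_univ i)] at h1
    have h2 : ∑ j ∈ univ.erase i, #(B j) ≤ (k - 1) * (L + C) := by
      have := Finset.sum_le_card_nsmul (univ.erase i) (fun j => #(B j)) (L + C)
        (fun j _ => hBu j)
      simpa using this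
    obtain ⟨k', rfl⟩ : ∃ k', k = k' + 1 := ⟨k - 1, by omega⟩
    simp only [Nat.add_sub_cancel] at h2
    nlinarith
  -- misses of `x` inside and outside of a class
  have htwo : ∀ x i j, i ≠ j →
      #{w ∈ B i | ¬ R.Adj x w} + #{w ∈ B j | ¬ R.Adj x w} ≤ L + C := by
    intro x i j hij
    rw [← Finset.card_union_of_disjoint
      (Finset.disjoint_filter_filter (hdisj i j hij))]
    refine le_trans (Finset.card_le_card ?_) (hnon x)
    intro w hw
    simp only [mem_union, mem_filter] at hw
    simp only [mem_filter, mem_univ, true_and]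
    tauto
  have hmiss : ∀ i j, i ≠ j → ∀ x ∈ B i, #{w ∈ B j | ¬ R.Adj x w} ≤ e := by
    intro i j hij x hx
    have h1 := htwo x i j hij
    have h2 : ({w ∈ B i | ¬ R.Adj x w} : Finset W) = B i :=
      Finset.filter_true_of_mem (fun w hw => hind i x hx w hw)
    rw [h2] at h1
    have := hBl i
    omega
  have hcol : ∀ v, ∃ i, #{w ∈ B i | R.Adj v w} < k * m * e + m := by
    intro v
    by_contra! hcon
    obtain ⟨T, h1, h2, h3⟩ := aux_greedy R (m := m) B (fun i => {w ∈ B i | R.Adj v w})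
      (fun i => Finset.filter_subset _ _) hmiss hcon
    exact aux_vertex R hk hm hfree T (fun i => (h2 i).ge) h3 v
      (fun i a ha => (Finset.mem_filter.1 (h1 i ha)).2)
  choose c hc using hcol
  have hout : ∀ v j, j ≠ c v → #{w ∈ B j | ¬ R.Adj v w} ≤ e + (k * m * e + m) := by
    intro v j hj
    have h1 := htwo v (c v) j hj.symm
    have h2 := Finset.card_filter_add_card_filter_not (s := B (c v)) (fun w => R.Adj v w)
    have h3 := hBl (c v)
    have h4 := hc v
    omega
  refine ⟨SimpleGraph.Coloring.mk c ?_⟩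
  intro x y hxy hcxy
  obtain ⟨T, h1, h2, h3⟩ := aux_greedy R (m := m) B
    (fun j => if j = c x then B j else {w ∈ B j | R.Adj x w ∧ R.Adj y w})
    (fun j => by split_ifs; exacts [subset_rfl, Finset.filter_subset _ _])
    hmiss (fun j => by
      have hl := hBl j
      split_ifs with h
      · omega
      · have h1 := hout x j h
        have h2 := hout y j (hcxy ▸ h)
        have h3 : #(B j) ≤ #{w ∈ B j | R.Adj x w ∧ R.Adj y w} +
            (#{w ∈ B j | ¬ R.Adj x w} + #{w ∈ B j | ¬ R.Adj y w}) := by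
          calc #(B j) ≤ #({w ∈ B j | R.Adj x w ∧ R.Adj y w} ∪
                ({w ∈ B j | ¬ R.Adj x w} ∪ {w ∈ B j | ¬ R.Adj y w})) := by
                apply Finset.card_le_card
                intro w hw
                simp only [mem_union, mem_filter, hw, true_and]
                tauto
            _ ≤ _ := (Finset.card_union_le _ _).trans
                (Nat.add_le_add_left (Finset.card_union_le _ _) _)
        omega)
  refine hfree T (c x) x y (fun i => (h2 i).ge) h3 hxy ?_
  intro j hj a ha
  have := h1 j ha
  rw [if_neg hj] at this
  exact (Finset.mem_filter.1 this).2

open Finset in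
/-- Complete multipartite subgraph, from the minimum degree Erdős–Stone theorem. -/
theorem aux_stone (k s C : ℕ) (hk : 2 ≤ k) : ∃ N₀ : ℕ, ∀ N L : ℕ, N₀ ≤ N → k * L ≤ N →
    ∀ (R : SimpleGraph (Fin N)) [DecidableRel R.Adj], (∀ v, #{w | ¬ R.Adj v w} ≤ L + C) →
    ∃ A : Fin k → Finset (Fin N), (∀ i, #(A i) = s) ∧ auxJoined R A := by
  classical
  obtain ⟨r, rfl⟩ : ∃ r, k = r + 1 := ⟨k - 1, by omega⟩
  have hr : (0 : ℝ) < r := by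
    have : 0 < r := by omega
    exact_mod_cast this
  let ε : ℝ := (1 / r - 1 / (r + 1)) / 2
  have hε : 0 < ε := by
    have : (1 : ℝ) / (r + 1) < 1 / r := one_div_lt_one_div_of_lt hr (by linarith)
    simp only [ε]; linarith
  obtain ⟨N₁, hN₁⟩ := Filter.eventually_atTop.1
    (SimpleGraph.eventually_completeEquipartiteGraph_isContained_of_minDegree hε r s)
  refine ⟨max (max N₁ 1) ⌈C / ε⌉₊, fun N L hN hL R _ hnon => ?_⟩
  have hNN1 : N₁ ≤ N := le_trans (le_trans (le_max_left _ _) (le_max_left _ _)) hN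
  have hN1 : 1 ≤ N := le_trans (le_trans (le_max_right _ _) (le_max_left _ _)) hN
  have hCN : (C : ℝ) ≤ ε * N := by
    have h1 : (C : ℝ) / ε ≤ N := le_trans (Nat.le_ceil _)
      (by exact_mod_cast le_trans (le_max_right _ _) hN)
    rw [div_le_iff₀ hε] at h1
    linarith
  have hdeg : ∀ v, N ≤ R.degree v + (L + C) := by
    intro v
    have h1 := Finset.card_filter_add_card_filter_not (s := (univ : Finset (Fin N)))
      (fun w => R.Adj v w)
    have h2 : R.degree v = #{w | R.Adj v w} := by
      rw [← SimpleGraph.card_neighborFinset_eq_degree, SimpleGraph.neighborFinset_eq_filter]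
    have := hnon v
    simp only [Finset.card_univ, Fintype.card_fin] at h1
    omega
  have : Nonempty (Fin N) := ⟨⟨0, hN1⟩⟩
  obtain ⟨v, hv⟩ := R.exists_minimal_degree_vertex
  have hmin : (R.minDegree : ℝ) ≥ (1 - 1 / r + ε) * N := by
    rw [hv]
    have h1 : (N : ℝ) ≤ R.degree v + (L + C) := by exact_mod_cast hdeg v
    have h2 : ((r : ℝ) + 1) * L ≤ N := by exact_mod_cast hL
    have h3 : (L : ℝ) ≤ 1 / (r + 1) * N := by
      rw [one_div, inv_mul_eq_div, le_div_iff₀ (by linarith)]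
      linarith
    have h4 : (1 - 1 / (r : ℝ) + ε) = 1 - 1 / (r + 1) - ε := by simp only [ε]; ring
    rw [h4]
    nlinarith
  obtain ⟨f⟩ := hN₁ N hNN1 hmin
  refine ⟨fun i => univ.image fun a => f (i, a), fun i => ?_, ?_⟩
  · rw [Finset.card_image_of_injective]
    · simp
    · intro a b hab
      have := f.injective hab
      simpa using this
  · intro i j hij a ha b hb
    simp only [mem_image, mem_univ, true_and] at ha hb
    obtain ⟨a, rfl⟩ := ha
    obtain ⟨b, rfl⟩ := hb
    apply f.toHom.map_adj
    simp [hij]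

theorem statement_1 (k t : ℕ) (hk : 2 ≤ k) (ht : 2 ≤ t)
    {V : Type*} [Fintype V] (G : SimpleGraph V)
    (hchi : G.chromaticNumber = (k + 1 : ℕ)) (hcrit : EdgeCritical G) :
    ∃ n₀ : ℕ, ∀ n : ℕ, n₀ ≤ n → arrows (k * n * t + 1) G (genFan n t) := by
  classical
  obtain ⟨u, v, huv, hdel⟩ := hcrit
  have hncol : ¬ G.Colorable k := by
    rw [← SimpleGraph.chromaticNumber_le_iff_colorable, hchi]
    norm_cast
    omega
  have hcol : (G.deleteEdges {s(u, v)}).Colorable k := by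
    rw [← SimpleGraph.chromaticNumber_le_iff_colorable]
    rw [hchi] at hdel
    push_cast at hdel
    have := WithTop.add_right_cancel (by simp : (1 : ℕ∞) ≠ ⊤) hdel
    exact this.le
  obtain ⟨C, hC⟩ := aux_nonnbr G t
  obtain ⟨m, hm⟩ : ∃ m, m = Fintype.card V + 2 := ⟨_, rfl⟩
  obtain ⟨q, hq⟩ : ∃ q, q = (k * m) * (6 * (1 + k * m)) := ⟨_, rfl⟩
  obtain ⟨N₀, hN₀⟩ := aux_stone k (2 * q + m) C hk
  have hm0 : 0 < m := by omega
  have hkm : 0 < k * m := Nat.mul_pos (by omega) hm0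
  refine ⟨N₀ + (k * (2 * q + m) * C + 6 * ((1 + k * m) * (k * C) + m)), fun n hn R => ?_⟩
  by_contra hcon
  push Not at hcon
  obtain ⟨hG, hF⟩ := hcon
  apply hF
  apply aux_colorable
  have hnon := hC _ n R hG hF
  have hnt : n ≤ n * t := Nat.le_mul_of_pos_right _ (by omega)
  have hknt : n * t ≤ k * (n * t) := Nat.le_mul_of_pos_left _ (by omega)
  have hL : k * (n * t) ≤ k * n * t + 1 := by rw [mul_assoc]; omega
  have hfree : auxFree R k m := hm ▸ aux_embed G R k u v huv hcol hncol hG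
  obtain ⟨A, hA, hJ⟩ := hN₀ (k * n * t + 1) (n * t) (by omega) hL R hnon
  have hL' : k * (n * t) ≤ Fintype.card (Fin (k * n * t + 1)) := by simpa using hL
  obtain ⟨B, hdisj, hind, bad, hbad, hqb⟩ :=
    aux_stage1 R (by omega) hm0 hfree hL' hnon A hA hJ
  refine aux_stage2 R (by omega) hm0 hfree hL' hnon B hdisj hind bad hbad le_rfl ?_
  generalize n * t = L at *
  generalize bad.card = b at *
  have hb : 6 * (1 + k * m) * b ≤ L + k * (2 * q + m) * C := by
    refine Nat.le_of_mul_le_mul_left ?_ hkm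
    have h1 : k * m * (6 * (1 + k * m) * b) = q * b := by rw [hq]; ring
    have h2 : k * (2 * q + m) * C ≤ k * m * (k * (2 * q + m) * C) :=
      Nat.le_mul_of_pos_left _ hkm
    rw [h1, Nat.mul_add]
    omega
  have h3 : 6 * ((1 + k * m) * (k * C) + m) + k * (2 * q + m) * C ≤ L := by omega
  nlinarith
end

section
/- Let k ≥ 2 and t ≥ 2 be integers and let G be a fixed edge-critical graph with chromatic number χ(G) = k + 1. Then there exists n₀ such that for all integers n ≥ n₀, the star-critical Ramsey number satisfies r₊(G, K₁ + nK_t) = (k−1)·n·t + t. -/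
open SimpleGraph

/-- Critical colouring data. -/
def CritCol {V : Type*} (G : SimpleGraph V) (k : ℕ) : Prop :=
  ∃ (u v : V) (c : V → Fin k), G.Adj u v ∧ c u = c v ∧
    ∀ a b, G.Adj a b → s(a, b) ≠ s(u, v) → c a ≠ c b

open scoped Classical in
lemma greedy {V β ι : Type*} [Fintype V] (R : SimpleGraph β) (c : V → ι) (A : ι → Finset β) (D : ℕ)
    (hD : ∀ i j, i ≠ j → ∀ a ∈ A i, ((A j).filter (fun b => ¬ R.Adj a b)).card ≤ D)
    (hA : ∀ i, Fintype.card V * (D + 1) ≤ (A i).card) (S : Finset V) :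
    ∃ f : V → β, (∀ w ∈ S, f w ∈ A (c w)) ∧ (∀ w ∈ S, ∀ w' ∈ S, w ≠ w' → f w ≠ f w' ∧
      (c w ≠ c w' → R.Adj (f w) (f w'))) := by
  induction S using Finset.induction_on with
  | empty =>
    have : ∀ w : V, ∃ b, b ∈ A (c w) := by
      intro w
      have h1 : 0 < Fintype.card V := Fintype.card_pos_iff.mpr ⟨w⟩
      have h2 := hA (c w)
      have h3 : 0 < Fintype.card V * (D + 1) := by positivity
      exact Finset.card_pos.mp (lt_of_lt_of_le h3 h2)
    choose f hf using this
    exact ⟨f, by simp, by simp⟩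
  | insert w0 S hw ih =>
    obtain ⟨f, hf1, hf2⟩ := ih
    let bad : Finset β := S.biUnion (fun w => insert (f w)
      (if c w ≠ c w0 then (A (c w0)).filter (fun b => ¬ R.Adj (f w) b) else ∅))
    have hbad : bad.card ≤ S.card * (D + 1) := by
      apply Finset.card_biUnion_le_card_mul
      intro w hw
      refine (Finset.card_insert_le _ _).trans ?_
      gcongr
      split_ifs with h
      · exact hD _ _ h _ (hf1 w hw)
      · simp
    have hS : S.card < Fintype.card V := by
      have h1 := Finset.card_le_univ (insert w0 S)
      rw [Finset.card_insert_of_notMem hw] at h1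
      omega
    have hlt : bad.card < (A (c w0)).card := by
      refine lt_of_le_of_lt hbad (lt_of_lt_of_le ?_ (hA _))
      exact Nat.mul_lt_mul_of_pos_right hS (by omega)
    obtain ⟨b, hbA, hb⟩ := Finset.exists_mem_notMem_of_card_lt_card hlt
    have hb' : ∀ w ∈ S, b ≠ f w ∧ (c w ≠ c w0 → R.Adj (f w) b) := by
      intro w hwS
      constructor
      · rintro rfl
        exact hb (Finset.mem_biUnion.mpr ⟨w, hwS, Finset.mem_insert_self _ _⟩)
      · intro hc
        by_contra hn
        refine hb (Finset.mem_biUnion.mpr ⟨w, hwS, Finset.mem_insert_of_mem ?_⟩)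
        rw [if_pos hc]
        exact Finset.mem_filter.mpr ⟨hbA, hn⟩
    have hne : ∀ w ∈ S, w ≠ w0 := fun w h e => hw (e ▸ h)
    refine ⟨Function.update f w0 b, ?_, ?_⟩
    · intro w h
      rcases Finset.mem_insert.mp h with rfl | h
      · simpa using hbA
      · rw [Function.update_of_ne (hne w h)]; exact hf1 w h
    · intro w h w' h' hww
      rcases Finset.mem_insert.mp h with h1 | h1 <;> rcases Finset.mem_insert.mp h' with h2 | h2
      · exact absurd (h1.trans h2.symm) hww
      · rw [h1, Function.update_self, Function.update_of_ne (hne w' h2)]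
        exact ⟨(hb' w' h2).1, fun hc => ((hb' w' h2).2 hc.symm).symm⟩
      · rw [h2, Function.update_self, Function.update_of_ne (hne w h1)]
        exact ⟨(hb' w h1).1.symm, fun hc => (hb' w h1).2 hc⟩
      · rw [Function.update_of_ne (hne w h1), Function.update_of_ne (hne w' h2)]
        exact hf2 w h1 w' h2 hww

open scoped Classical in
lemma embed {V β : Type*} [Fintype V] (G : SimpleGraph V) (k : ℕ) (hG : CritCol G k)
    (R : SimpleGraph β) (A : Fin k → Finset β) (D : ℕ) (i0 : Fin k) (x y : β) (hxy : R.Adj x y)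
    (hx : x ∉ A i0) (hy : y ∉ A i0) (hxA : ∀ j, j ≠ i0 → ∀ a ∈ A j, R.Adj x a ∧ R.Adj y a)
    (hD : ∀ i j, i ≠ j → ∀ a ∈ A i, ((A j).filter (fun b => ¬ R.Adj a b)).card ≤ D)
    (hA : ∀ i, Fintype.card V * (D + 1) ≤ (A i).card) : containsCopy R G := by
  obtain ⟨u, v, c0, huv, hc, hcol⟩ := hG
  let c : V → Fin k := fun w => Equiv.swap (c0 u) i0 (c0 w)
  have hcu : c u = i0 := by simp [c]
  have hcv : c v = i0 := by simp [c, ← hc]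
  have hcc : ∀ a b, G.Adj a b → s(a, b) ≠ s(u, v) → c a ≠ c b := by
    intro a b h1 h2 h3
    exact hcol a b h1 h2 ((Equiv.swap (c0 u) i0).injective h3)
  obtain ⟨f, hf1, hf2⟩ := greedy R c A D hD hA Finset.univ
  simp only [Finset.mem_univ, forall_true_left] at hf1 hf2
  have hxn : ∀ j, x ∉ A j := by
    intro j
    by_cases h : j = i0
    · exact h ▸ hx
    · exact fun h' => R.irrefl (hxA j h x h').1
  have hyn : ∀ j, y ∉ A j := by
    intro j
    by_cases h : j = i0
    · exact h ▸ hy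
    · exact fun h' => R.irrefl (hxA j h y h').2
  have huv' := huv.ne
  let g : V → β := fun w => if w = u then x else if w = v then y else f w
  have gu : g u = x := by simp [g]
  have gv : g v = y := by simp [g, huv'.symm]
  have go : ∀ w, w ≠ u → w ≠ v → g w = f w := fun w h1 h2 => by simp [g, h1, h2]
  refine ⟨⟨g, ?_⟩, ?_⟩
  · have key : ∀ a b, G.Adj a b → (a = u ∨ (a ≠ u ∧ a ≠ v ∧ b ≠ u ∧ b ≠ v) ∨ (a = v ∧ b ≠ u)) →
      R.Adj (g a) (g b) := by
      intro a b hab h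
      rcases h with rfl | ⟨h1, h2, h3, h4⟩ | ⟨rfl, h3⟩
      · by_cases hb : b = v
        · subst hb; rw [gu, gv]; exact hxy
        · have hbu : b ≠ a := hab.ne.symm
          rw [gu, go b hbu hb]
          refine (hxA (c b) ?_ _ (hf1 b)).1
          rw [← hcu]
          refine (hcc a b hab ?_).symm
          simp [hb, huv']
      · rw [go a h1 h2, go b h3 h4]
        refine (hf2 a b hab.ne).2 (hcc a b hab ?_)
        simp [h1, h2]
      · have hbv : b ≠ a := hab.ne.symm
        rw [gv, go b h3 hbv]
        refine (hxA (c b) ?_ _ (hf1 b)).2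
        rw [← hcv]
        refine (hcc a b hab ?_).symm
        simp [h3, huv'.symm]
    intro a b hab
    have hab' := hab.ne
    by_cases h1 : a = u ∨ (a ≠ u ∧ a ≠ v ∧ b ≠ u ∧ b ≠ v) ∨ (a = v ∧ b ≠ u)
    · exact key a b hab h1
    · refine (key b a hab.symm ?_).symm
      grind
  · intro a b hab
    change g a = g b at hab
    by_contra hne
    have hfx : ∀ w, f w ≠ x := fun w h => hxn _ (h ▸ hf1 w)
    have hfy : ∀ w, f w ≠ y := fun w h => hyn _ (h ▸ hf1 w)
    have hfn := (hf2 a b hne).1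
    have hxy' := hxy.ne
    simp only [g] at hab
    grind

/-- finite Ramsey -/
lemma ramsey_fin (a b : ℕ) : ∃ N : ℕ, ∀ {α : Type} (R : SimpleGraph α) (S : Finset α), N ≤ S.card →
    (∃ T ⊆ S, T.card = a ∧ ∀ x ∈ T, ∀ y ∈ T, x ≠ y → R.Adj x y) ∨
    (∃ T ⊆ S, T.card = b ∧ ∀ x ∈ T, ∀ y ∈ T, x ≠ y → ¬ R.Adj x y) := by
  classical
  induction a generalizing b with
  | zero => exact ⟨0, fun R S _ => Or.inl ⟨∅, by simp, by simp, by simp⟩⟩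
  | succ a iha =>
    induction b with
    | zero => exact ⟨0, fun R S _ => Or.inr ⟨∅, by simp, by simp, by simp⟩⟩
    | succ b ihb =>
      obtain ⟨N1, h1⟩ := iha (b + 1)
      obtain ⟨N2, h2⟩ := ihb
      refine ⟨N1 + N2 + 1, fun R S hS => ?_⟩
      obtain ⟨x, hx⟩ : S.Nonempty := Finset.card_pos.mp (by omega)
      have hc := Finset.card_filter_add_card_filter_not (s := S.erase x) (fun y => R.Adj x y)
      rw [Finset.card_erase_of_mem hx] at hc
      by_cases h : N1 ≤ ((S.erase x).filter (fun y => R.Adj x y)).card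
      · rcases h1 R _ h with ⟨T, hT, hTc, hTa⟩ | ⟨T, hT, hTc, hTa⟩
        · left
          have hT' : ∀ y ∈ T, y ∈ S ∧ y ≠ x ∧ R.Adj x y := fun y hy => by
            have := hT hy
            simp at this; tauto
          refine ⟨insert x T, ?_, ?_, ?_⟩
          · intro y hy
            rcases Finset.mem_insert.mp hy with rfl | hy
            · exact hx
            · exact (hT' y hy).1
          · rw [Finset.card_insert_of_notMem (fun hxT => (hT' x hxT).2.1 rfl), hTc]
          · intro y hy z hz hyz
            rcases Finset.mem_insert.mp hy with h3 | h3 <;>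
              rcases Finset.mem_insert.mp hz with h4 | h4
            · exact absurd (h3.trans h4.symm) hyz
            · exact h3 ▸ (hT' z h4).2.2
            · exact h4 ▸ (hT' y h3).2.2.symm
            · exact hTa y h3 z h4 hyz
        · right
          exact ⟨T, hT.trans ((Finset.filter_subset _ _).trans (Finset.erase_subset _ _)), hTc, hTa⟩
      · have h' : N2 ≤ ((S.erase x).filter (fun y => ¬ R.Adj x y)).card := by omega
        rcases h2 R _ h' with ⟨T, hT, hTc, hTa⟩ | ⟨T, hT, hTc, hTa⟩
        · left
          exact ⟨T, hT.trans ((Finset.filter_subset _ _).trans (Finset.erase_subset _ _)), hTc, hTa⟩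
        · right
          have hT' : ∀ y ∈ T, y ∈ S ∧ y ≠ x ∧ ¬ R.Adj x y := fun y hy => by
            have := hT hy
            simp at this; tauto
          refine ⟨insert x T, ?_, ?_, ?_⟩
          · intro y hy
            rcases Finset.mem_insert.mp hy with rfl | hy
            · exact hx
            · exact (hT' y hy).1
          · rw [Finset.card_insert_of_notMem (fun hxT => (hT' x hxT).2.1 rfl), hTc]
          · intro y hy z hz hyz
            rcases Finset.mem_insert.mp hy with h3 | h3 <;>
              rcases Finset.mem_insert.mp hz with h4 | h4
            · exact absurd (h3.trans h4.symm) hyz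
            · exact h3 ▸ (hT' z h4).2.2
            · exact h4 ▸ fun hh => (hT' y h3).2.2 hh.symm
            · exact hTa y h3 z h4 hyz

lemma tile_succ {α : Type*} (P : α → α → Prop) (t n : ℕ) (T : Finset α) (hTc : T.card = t)
    (hT : ∀ x ∈ T, ∀ y ∈ T, P x y) (g : Fin n × Fin t → α) (hg1 : Function.Injective g)
    (hgT : ∀ p, g p ∉ T) (hg3 : ∀ p q, p.1 = q.1 → P (g p) (g q)) :
    ∃ h : Fin (n + 1) × Fin t → α, Function.Injective h ∧ (∀ p, h p ∈ T ∨ ∃ q, h p = g q) ∧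
      ∀ p q, p.1 = q.1 → P (h p) (h q) := by
  classical
  let e := (Finset.equivFinOfCardEq hTc).symm
  let h : Fin (n + 1) × Fin t → α := fun p =>
    Fin.cases (motive := fun _ => α) (e p.2 : α) (fun i => g (i, p.2)) p.1
  refine ⟨h, ?_, ?_, ?_⟩
  · rintro ⟨i, a⟩ ⟨j, b⟩ hab
    induction i using Fin.cases with
    | zero =>
      induction j using Fin.cases with
      | zero =>
        have : (e a : α) = e b := hab
        have := e.injective (Subtype.ext this)
        rw [this]
      | succ j =>
        have : (e a : α) = g (j, b) := hab
        exact absurd (this ▸ (e a).2) (hgT _)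
    | succ i =>
      induction j using Fin.cases with
      | zero =>
        have : g (i, a) = (e b : α) := hab
        exact absurd (this ▸ (e b).2) (hgT _)
      | succ j =>
        have : g (i, a) = g (j, b) := hab
        have := hg1 this
        simp at this
        rw [this.1, this.2]
  · rintro ⟨i, a⟩
    induction i using Fin.cases with
    | zero => exact Or.inl (e a).2
    | succ i => exact Or.inr ⟨(i, a), rfl⟩
  · rintro ⟨i, a⟩ ⟨j, b⟩ hij
    dsimp at hij
    subst hij
    induction i using Fin.cases with
    | zero => exact hT _ (e a).2 _ (e b).2
    | succ i => exact hg3 _ _ rfl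

/-- tiling a set by independent `t`-sets -/
lemma tiling {α : Type} (R : SimpleGraph α) (t C : ℕ)
    (hC : ∀ S : Finset α, C ≤ S.card →
      ∃ T ⊆ S, T.card = t ∧ ∀ x ∈ T, ∀ y ∈ T, x ≠ y → ¬ R.Adj x y) (n : ℕ) :
    ∀ S : Finset α, n * t + C ≤ S.card →
      ∃ g : Fin n × Fin t → α, Function.Injective g ∧ (∀ p, g p ∈ S) ∧
        ∀ p q, p.1 = q.1 → ¬ R.Adj (g p) (g q) := by
  classical
  induction n with
  | zero => exact fun S _ => ⟨fun p => p.1.elim0, fun p => p.1.elim0, fun p => p.1.elim0, fun p => p.1.elim0⟩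
  | succ n ih =>
    intro S hS
    obtain ⟨T, hTS, hTc, hT⟩ := hC S (by omega)
    have hc := Finset.card_sdiff_of_subset hTS
    obtain ⟨g, hg1, hg2, hg3⟩ := ih (S \ T) (by rw [hc, hTc]; rw [Nat.succ_mul] at hS; omega)
    obtain ⟨h, h1, h2, h3⟩ := tile_succ (fun x y => ¬ R.Adj x y) t n T hTc (by
      intro x hx y hy
      by_cases hh : x = y
      · rw [hh]; exact R.irrefl
      · exact hT _ hx _ hy hh) g hg1 (fun p => (Finset.mem_sdiff.mp (hg2 p)).2) hg3
    refine ⟨h, h1, ?_, h3⟩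
    intro p
    rcases h2 p with h2 | ⟨q, h2⟩
    · exact hTS h2
    · rw [h2]; exact (Finset.mem_sdiff.mp (hg2 q)).1

open scoped Classical in
lemma dcount {α : Type} [Fintype α] (R : SimpleGraph α) (U : Finset α) (L : ℕ)
    (hL : ∀ a, (Finset.univ.filter (fun b => ¬ R.Adj a b)).card ≤ L) (g : α → ℕ)
    (hg : ∀ x, g x ≤ (U.filter (fun a => ¬ R.Adj x a)).card) :
    ∑ x, g x ≤ U.card * L := by
  calc ∑ x, g x ≤ ∑ x, (U.filter (fun a => ¬ R.Adj x a)).card := Finset.sum_le_sum (fun x _ => hg x)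
    _ = ∑ a ∈ U, (Finset.univ.filter (fun x => ¬ R.Adj x a)).card :=
        Finset.sum_card_bipartiteAbove_eq_sum_card_bipartiteBelow (fun x a => ¬ R.Adj x a)
    _ ≤ ∑ a ∈ U, L := by
        apply Finset.sum_le_sum
        intro a _
        simpa only [R.adj_comm] using hL a
    _ = U.card * L := by simp

open scoped Classical in
lemma multip (k C : ℕ) (r : ℕ) (hr : r ≤ k) : ∀ M : ℕ, 1 ≤ M → ∃ s0 : ℕ,
    ∀ {α : Type} [Fintype α] (R : SimpleGraph α) (s : ℕ), s0 ≤ s → Fintype.card α = k * s →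
    (∀ a, (Finset.univ.filter (fun b => ¬ R.Adj a b)).card ≤ s + C) →
    ∃ A : ℕ → Finset α, (∀ i < r, (A i).card = M) ∧
      ∀ i < r, ∀ j < r, i ≠ j → ∀ a ∈ A i, ∀ b ∈ A j, R.Adj a b := by
  induction r with
  | zero =>
    intro M _
    exact ⟨0, fun R s _ _ _ => ⟨fun _ => ∅, by simp, by simp⟩⟩
  | succ r ih =>
    intro M hM
    obtain ⟨κ, rfl⟩ : ∃ κ, k = κ + 1 := ⟨k - 1, by omega⟩
    obtain ⟨s0, hs0⟩ := ih (by omega) (2 * (κ + 1) * M) (by nlinarith)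
    set M' := 2 * (κ + 1) * M with hM'
    set K := 2 ^ (r * M') * M with hK
    refine ⟨s0 + K * (2 * κ + 1) + 2 * (κ + 1) * κ * C, ?_⟩
    intro α _ R s hs hcard hdeg
    obtain ⟨A, hA1, hA2⟩ := hs0 R s (by omega) hcard hdeg
    let W : Finset α := Finset.univ.filter
      (fun x => ∀ i < r, M ≤ ((A i).filter (fun a => R.Adj x a)).card)
    let U : Finset α := (Finset.range r).biUnion A
    have hU : U.card ≤ r * M' := by
      have := Finset.card_biUnion_le_card_mul (Finset.range r) A M'
        (fun i hi => (hA1 i (Finset.mem_range.mp hi)).le)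
      simpa using this
    have hAU : ∀ i < r, A i ⊆ U := fun i hi =>
      Finset.subset_biUnion_of_mem A (Finset.mem_range.mpr hi)
    have hW : K ≤ W.card := by
      by_contra hlt
      push Not at hlt
      have h1 := dcount R U (s + C) hdeg (fun x => if x ∈ W then 0 else (2 * κ + 1) * M) (by
        intro x
        split_ifs with hx
        · exact Nat.zero_le _
        · have : ∃ i < r, ((A i).filter (fun a => R.Adj x a)).card < M := by
            by_contra hcon
            push Not at hcon
            exact hx (Finset.mem_filter.mpr ⟨Finset.mem_univ _, hcon⟩)
          obtain ⟨i, hi, hlt⟩ := this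
          have h2 := Finset.card_filter_add_card_filter_not (s := A i) (fun a => R.Adj x a)
          rw [hA1 i hi, hM'] at h2
          have h3 : ((A i).filter (fun a => ¬ R.Adj x a)).card ≤
              (U.filter (fun a => ¬ R.Adj x a)).card :=
            Finset.card_le_card (Finset.filter_subset_filter _ (hAU i hi))
          refine le_trans ?_ h3
          nlinarith)
      have h2 : ∑ x, (if x ∈ W then 0 else (2 * κ + 1) * M) = (Finset.univ \ W).card * ((2 * κ + 1) * M) := by
        rw [Finset.sum_ite]
        simp only [Finset.sum_const_zero, zero_add, Finset.sum_const, smul_eq_mul]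
        congr 2
        ext x; simp
      have h3 : (Finset.univ \ W).card + W.card = (κ + 1) * s := by
        rw [Finset.card_sdiff_add_card_eq_card (Finset.subset_univ _), Finset.card_univ, hcard]
      rw [h2] at h1
      have h4 : (Finset.univ \ W).card * ((2 * κ + 1) * M) ≤ (κ * (2 * (κ + 1) * M)) * (s + C) := by
        refine h1.trans ?_
        refine Nat.mul_le_mul_right _ (hU.trans ?_)
        exact Nat.mul_le_mul_right _ (by omega)
      have h5 : (Finset.univ \ W).card * (2 * κ + 1) ≤ (κ * (2 * (κ + 1))) * (s + C) := by
        refine Nat.le_of_mul_le_mul_right ?_ hM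
        calc _ = (Finset.univ \ W).card * ((2 * κ + 1) * M) := by ring
          _ ≤ _ := h4
          _ = _ := by ring
      generalize (Finset.univ \ W).card = w at *
      generalize W.card = w' at *
      have h6 : w * (2 * κ + 1) + w' * (2 * κ + 1) = (κ + 1) * s * (2 * κ + 1) := by
        rw [← h3]; ring
      have h7 : w' * (2 * κ + 1) < K * (2 * κ + 1) := Nat.mul_lt_mul_of_pos_right hlt (by omega)
      nlinarith
    have hmaps : ∀ x ∈ W, U.filter (fun a => R.Adj x a) ∈ U.powerset := fun x _ =>
      Finset.mem_powerset.mpr (Finset.filter_subset _ _)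
    obtain ⟨P, hP, hPc⟩ := Finset.exists_le_card_fiber_of_mul_le_card_of_maps_to (n := M) hmaps
      ⟨∅, by simp⟩ (by
        rw [Finset.card_powerset]
        refine le_trans ?_ hW
        exact Nat.mul_le_mul_right _ (Nat.pow_le_pow_right (by norm_num) hU))
    obtain ⟨Q, hQ, hQc⟩ := Finset.exists_subset_card_eq hPc
    have hQ' : ∀ x ∈ Q, x ∈ W ∧ U.filter (fun a => R.Adj x a) = P := fun x hx => by
      simpa using hQ hx
    obtain ⟨x0, hx0⟩ : Q.Nonempty := Finset.card_pos.mp (by omega)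
    have hx0W := (Finset.mem_filter.mp (hQ' x0 hx0).1).2
    have hsub : ∀ i, ∃ T : Finset α, i < r →
        T ⊆ (A i).filter (fun a => R.Adj x0 a) ∧ T.card = M := by
      intro i
      by_cases hi : i < r
      · obtain ⟨T, h1, h2⟩ := Finset.exists_subset_card_eq (hx0W i hi)
        exact ⟨T, fun _ => ⟨h1, h2⟩⟩
      · exact ⟨∅, fun h => absurd h hi⟩
    choose T hT using hsub
    have hTA : ∀ i < r, ∀ a ∈ T i, a ∈ A i := fun i hi a ha =>
      (Finset.mem_filter.mp ((hT i hi).1 ha)).1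
    have hTQ : ∀ i < r, ∀ a ∈ T i, ∀ x ∈ Q, R.Adj x a := by
      intro i hi a ha x hx
      have h1 := Finset.mem_filter.mp ((hT i hi).1 ha)
      have h2 : a ∈ P := by
        rw [← (hQ' x0 hx0).2]
        exact Finset.mem_filter.mpr ⟨hAU i hi h1.1, h1.2⟩
      rw [← (hQ' x hx).2] at h2
      exact (Finset.mem_filter.mp h2).2
    refine ⟨fun i => if i < r then T i else Q, ?_, ?_⟩
    · intro i hi
      dsimp only
      split_ifs with h
      · exact (hT i h).2
      · exact hQc
    · intro i hi j hj hij a ha b hb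
      dsimp only at ha hb
      split_ifs at ha hb with h1 h2 h2
      · exact hA2 i h1 j h2 hij a (hTA i h1 a ha) b (hTA j h2 b hb)
      · exact (hTQ i h1 a ha b hb).symm
      · exact hTQ j h2 b hb a ha
      · omega

open scoped Classical in
lemma embed' {V β : Type*} [Fintype V] (G : SimpleGraph V) (k : ℕ) (hG : CritCol G k)
    (R : SimpleGraph β) (X : Fin k → Finset β) (D : ℕ) (i0 : Fin k) (x y : β) (hxy : R.Adj x y)
    (hD : ∀ i j, i ≠ j → ∀ a ∈ X i, ((X j).filter (fun b => ¬ R.Adj a b)).card ≤ D)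
    (h0 : Fintype.card V * (D + 1) + 2 ≤ (X i0).card)
    (hj : ∀ j, j ≠ i0 → Fintype.card V * (D + 1) + ((X j).filter (fun b => ¬ R.Adj x b)).card +
      ((X j).filter (fun b => ¬ R.Adj y b)).card ≤ (X j).card) : containsCopy R G := by
  let A : Fin k → Finset β := fun j => if j = i0 then (X j) \ {x, y} else
    (X j).filter (fun b => R.Adj x b ∧ R.Adj y b)
  have hA0 : A i0 = (X i0) \ {x, y} := by simp [A]
  have hAj : ∀ j, j ≠ i0 → A j = (X j).filter (fun b => R.Adj x b ∧ R.Adj y b) :=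
    fun j h => by simp [A, h]
  have hAX : ∀ j, A j ⊆ X j := by
    intro j
    by_cases h : j = i0
    · subst h; rw [hA0]; exact Finset.sdiff_subset
    · rw [hAj j h]; exact Finset.filter_subset _ _
  refine embed G k hG R A D i0 x y hxy (by simp [hA0]) (by simp [hA0]) ?_ ?_ ?_
  · intro j h a ha
    rw [hAj j h] at ha
    exact (Finset.mem_filter.mp ha).2
  · intro i j hij a ha
    exact (Finset.card_le_card (Finset.filter_subset_filter _ (hAX j))).trans
      (hD i j hij a (hAX i ha))
  · intro j
    by_cases h : j = i0
    · subst h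
      rw [hA0]
      have h1 := Finset.le_card_sdiff {x, y} (X j)
      have h2 : ({x, y} : Finset β).card ≤ 2 := Finset.card_le_two
      omega
    · rw [hAj j h]
      have h1 : X j ⊆ (X j).filter (fun b => R.Adj x b ∧ R.Adj y b) ∪
          ((X j).filter (fun b => ¬ R.Adj x b) ∪ (X j).filter (fun b => ¬ R.Adj y b)) := by
        intro a ha
        simp only [Finset.mem_union, Finset.mem_filter]
        tauto
      have h2 := Finset.card_le_card h1
      have h3 := Finset.card_union_le ((X j).filter (fun b => R.Adj x b ∧ R.Adj y b))
          ((X j).filter (fun b => ¬ R.Adj x b) ∪ (X j).filter (fun b => ¬ R.Adj y b))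
      have h4 := Finset.card_union_le ((X j).filter (fun b => ¬ R.Adj x b))
          ((X j).filter (fun b => ¬ R.Adj y b))
      have h5 := hj j h
      omega

open scoped Classical in
lemma struct1 {V : Type*} [Fintype V] (G : SimpleGraph V) (k C E : ℕ) (hG : CritCol G k)
    (_hE : 1 ≤ E) :
    ∃ s0 : ℕ, ∀ {α : Type} [Fintype α] (R : SimpleGraph α) (s : ℕ), s0 ≤ s →
    Fintype.card α = k * s →
    (∀ a, (Finset.univ.filter (fun b => ¬ R.Adj a b)).card ≤ s + C) →
    ¬ containsCopy R G →
    (∀ S : Finset α, (∀ x ∈ S, ∀ y ∈ S, ¬ R.Adj x y) → S.card ≤ s) →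
    ∃ (X : Fin k → Finset α) (b : ℕ), E * b ≤ s ∧ (∀ i, s ≤ (X i).card + b) ∧
      (∀ i, ∀ x ∈ X i, ∀ y ∈ X i, ¬ R.Adj x y) ∧ (∀ i j, i ≠ j → Disjoint (X i) (X j)) := by
  have hk : 1 ≤ k := by
    obtain ⟨u, _, c, _⟩ := hG
    exact Nat.one_le_of_lt (c u).2
  have hm : 1 ≤ Fintype.card V := by
    obtain ⟨u, _, c, _⟩ := hG
    exact Fintype.card_pos_iff.mpr ⟨u⟩
  set m := Fintype.card V with hmdef
  set q := 2 * m * k * E with hq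
  set M := 2 * q + m + 2 with hM
  obtain ⟨s0, hs0⟩ := multip k C k le_rfl M (by omega)
  refine ⟨s0 + M * C, ?_⟩
  intro α _ R s hs hcard hdeg hfree hind
  obtain ⟨A', hA1', hA2'⟩ := hs0 R s (by omega) hcard hdeg
  let A : Fin k → Finset α := fun i => A' i
  have hA1 : ∀ i, (A i).card = M := fun i => hA1' i i.2
  have hA2 : ∀ i j, i ≠ j → ∀ a ∈ A i, ∀ b ∈ A j, R.Adj a b := fun i j hij =>
    hA2' i i.2 j j.2 (fun h => hij (Fin.ext h))
  have hAD : ∀ i j, i ≠ j → ∀ a ∈ A i, ((A j).filter (fun b => ¬ R.Adj a b)).card ≤ 0 := by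
    intro i j hij a ha
    rw [Nat.le_zero, Finset.card_eq_zero, Finset.filter_eq_empty_iff]
    intro b hb
    simpa using hA2 i j hij a ha b hb
  have hdisj : ∀ i j, i ≠ j → Disjoint (A i) (A j) := by
    intro i j hij
    rw [Finset.disjoint_left]
    intro a ha hb
    exact R.irrefl (hA2 i j hij a ha a hb)
  have hσ : ∀ x, ∃ i, M < m + ((A i).filter (fun b => ¬ R.Adj x b)).card := by
    intro x
    by_contra hcon
    push Not at hcon
    let i0 : Fin k := ⟨0, by omega⟩
    have h1 := hcon i0
    have h2 := Finset.card_filter_add_card_filter_not (s := A i0) (fun a => R.Adj x a)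
    rw [hA1] at h2
    obtain ⟨y, hy⟩ : ((A i0).filter (fun a => R.Adj x a)).Nonempty :=
      Finset.card_pos.mp (by omega)
    rw [Finset.mem_filter] at hy
    refine hfree (embed' G k hG R A 0 i0 x y hy.2 hAD ?_ ?_)
    · rw [hA1]; omega
    · intro j hj
      have h3 := hAD i0 j hj.symm y hy.1
      have h4 := hcon j
      rw [hA1]; omega
  choose σ hσ using hσ
  let good : α → Prop := fun x => ∀ j, j ≠ σ x → ((A j).filter (fun b => ¬ R.Adj x b)).card ≤ q
  let X : Fin k → Finset α := fun i => Finset.univ.filter (fun x => σ x = i ∧ good x)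
  let bad : Finset α := Finset.univ.filter (fun x => ¬ good x)
  have hX : ∀ i x, x ∈ X i ↔ σ x = i ∧ good x := fun i x => by simp [X]
  have hXind : ∀ i, ∀ x ∈ X i, ∀ y ∈ X i, ¬ R.Adj x y := by
    intro i x hx y hy hxy
    rw [hX] at hx hy
    refine hfree (embed' G k hG R A 0 i x y hxy hAD ?_ ?_)
    · rw [hA1]; omega
    · intro j hj
      have h1 := hx.2 j (by rw [hx.1]; exact hj)
      have h2 := hy.2 j (by rw [hy.1]; exact hj)
      rw [hA1]; omega
  have hXdis : ∀ i j, i ≠ j → Disjoint (X i) (X j) := by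
    intro i j hij
    rw [Finset.disjoint_left]
    intro a ha hb
    rw [hX] at ha hb
    exact hij (ha.1.symm.trans hb.1)
  have hsum : ∑ i, (X i).card + bad.card = k * s := by
    rw [← hcard, ← Finset.card_univ,
      ← Finset.card_filter_add_card_filter_not (s := (Finset.univ : Finset α)) good]
    congr 1
    rw [Finset.card_eq_sum_card_fiberwise (f := σ) (t := Finset.univ) (by intro x _; simp)]
    refine Finset.sum_congr rfl fun i _ => ?_
    congr 1
    ext x
    simp [X, and_comm]
  refine ⟨X, bad.card, ?_, ?_, hXind, hXdis⟩
  · let U : Finset α := Finset.univ.biUnion A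
    have hAU : ∀ i, A i ⊆ U := fun i => Finset.subset_biUnion_of_mem A (Finset.mem_univ i)
    have hU : U.card ≤ k * M := by
      have := Finset.card_biUnion_le_card_mul Finset.univ A M (fun i _ => (hA1 i).le)
      simpa using this
    have h1 := dcount R U (s + C) hdeg (fun x => (2 * q + 2) + if good x then 0 else q) (by
      intro x
      have h2 := hσ x
      split_ifs with hx
      · have h3 : ((A (σ x)).filter (fun a => ¬ R.Adj x a)).card ≤
              (U.filter (fun a => ¬ R.Adj x a)).card :=
            Finset.card_le_card (Finset.filter_subset_filter _ (hAU _))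
        omega
      · have : ∃ j, j ≠ σ x ∧ q < ((A j).filter (fun b => ¬ R.Adj x b)).card := by
          by_contra hcon
          push Not at hcon
          exact hx hcon
        obtain ⟨j, hj, hq'⟩ := this
        have h3 : ((A (σ x)).filter (fun a => ¬ R.Adj x a)).card +
            ((A j).filter (fun a => ¬ R.Adj x a)).card ≤
              (U.filter (fun a => ¬ R.Adj x a)).card := by
          rw [← Finset.card_union_of_disjoint
            (Finset.disjoint_filter_filter (hdisj _ _ hj.symm)), ← Finset.filter_union]
          exact Finset.card_le_card (Finset.filter_subset_filter _
            (Finset.union_subset (hAU _) (hAU _)))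
        omega)
    have h2 : ∑ x : α, ((2 * q + 2) + if good x then 0 else q) =
        k * s * (2 * q + 2) + bad.card * q := by
      rw [Finset.sum_add_distrib, Finset.sum_ite]
      simp [bad, hcard]
    rw [h2] at h1
    have h3 : k * s * (2 * q + 2) + bad.card * q ≤ k * M * (s + C) :=
      h1.trans (Nat.mul_le_mul_right _ hU)
    generalize bad.card = b at *
    have h4 : b * q ≤ k * m * s + k * M * C := by
      have : k * M * (s + C) = k * s * (2 * q + 2) + (k * m * s + k * M * C) := by
        rw [hM]; ring
      omega
    have h5 : k * M * C ≤ k * m * s := by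
      have : M * C ≤ m * s := by nlinarith
      calc k * M * C = k * (M * C) := by ring
        _ ≤ k * (m * s) := Nat.mul_le_mul_left _ this
        _ = _ := by ring
    have h6 : (2 * m * k) * (E * b) ≤ (2 * m * k) * s := by
      calc (2 * m * k) * (E * b) = b * q := by rw [hq]; ring
        _ ≤ k * m * s + k * m * s := by omega
        _ = _ := by ring
    exact Nat.le_of_mul_le_mul_left h6 (by positivity)
  · intro i
    have h1 : ∑ j, (X j).card ≤ (X i).card + (k - 1) * s := by
      rw [← Finset.add_sum_erase _ _ (Finset.mem_univ i)]
      gcongr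
      have := Finset.sum_le_card_nsmul (Finset.univ.erase i) (fun j => (X j).card) s
        (fun j _ => hind _ (hXind j))
      simpa using this
    obtain ⟨κ, rfl⟩ : ∃ κ, k = κ + 1 := ⟨k - 1, by omega⟩
    have h2 : (κ + 1) * s = κ * s + s := by ring
    simp only [Nat.add_sub_cancel] at h1
    omega

open scoped Classical in
lemma struct2 {V : Type*} [Fintype V] (G : SimpleGraph V) (k C : ℕ) (hG : CritCol G k) :
    ∃ s0 : ℕ, ∀ {α : Type} [Fintype α] (R : SimpleGraph α) (s : ℕ), s0 ≤ s →
    Fintype.card α = k * s →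
    (∀ a, (Finset.univ.filter (fun b => ¬ R.Adj a b)).card ≤ s + C) →
    ¬ containsCopy R G →
    (∀ S : Finset α, (∀ x ∈ S, ∀ y ∈ S, ¬ R.Adj x y) → S.card ≤ s) →
    ∃ τ : α → Fin k, ∀ x y, τ x = τ y → ¬ R.Adj x y := by
  have hk : 1 ≤ k := by
    obtain ⟨u, _, c, _⟩ := hG
    exact Nat.one_le_of_lt (c u).2
  set m := Fintype.card V with hmdef
  obtain ⟨s0, hs0⟩ := struct1 G k C (2 * (10 + 10 * m)) hG (by omega)
  refine ⟨s0 + 2 * (10 * m * (C + 1) + 10 * (C + 1)), ?_⟩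
  intro α _ R s hs hcard hdeg hfree hind
  obtain ⟨X, b, hb, hXc, hXind, hXdis⟩ := hs0 R s (by omega) hcard hdeg hfree hind
  have hbig : 10 * (m * (C + b + 1)) + 10 * (C + b + 1) ≤ s := by
    nlinarith
  set D := C + b with hD
  set T := m * (D + 1) + D + 1 with hT
  have hmm : Fintype.card V * (D + 1) = m * (D + 1) := rfl
  let N : Fin k → α → ℕ := fun i z => ((X i).filter (fun a => ¬ R.Adj z a)).card
  have hF : ∀ i j z, i ≠ j → N i z + N j z ≤ s + C := by
    intro i j z hij
    refine le_trans ?_ (hdeg z)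
    rw [← Finset.card_union_of_disjoint
            (Finset.disjoint_filter_filter (hXdis _ _ hij)), ← Finset.filter_union]
    exact Finset.card_le_card (Finset.filter_subset_filter _ (Finset.subset_univ _))
  have hfull : ∀ i z, (∀ a ∈ X i, ¬ R.Adj z a) → N i z = (X i).card := by
    intro i z h
    simp only [N]
    rw [Finset.filter_true_of_mem h]
  have hXD : ∀ i j z, i ≠ j → (∀ a ∈ X i, ¬ R.Adj z a) → N j z ≤ D := by
    intro i j z hij h
    have h1 := hF i j z hij
    rw [hfull i z h] at h1
    have h2 := hXc i
    omega
  have hXD' : ∀ i j, i ≠ j → ∀ a ∈ X i, ((X j).filter (fun b => ¬ R.Adj a b)).card ≤ D :=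
    fun i j hij a ha => hXD i j a hij (hXind i a ha)
  have hτ : ∀ z, ∃ i, ∀ a ∈ X i, ¬ R.Adj z a := by
    intro z
    have h1 : ∃ i, (X i).card < N i z + T := by
      by_contra hcon
      push Not at hcon
      let i0 : Fin k := ⟨0, by omega⟩
      have h1 : N i0 z < (X i0).card := by have := hcon i0; omega
      have h2 : ∃ y ∈ X i0, R.Adj z y := by
        by_contra hno
        push Not at hno
        rw [hfull i0 z hno] at h1
        omega
      obtain ⟨y, hy, hzy⟩ := h2
      refine hfree (embed' G k hG R X D i0 z y hzy hXD' ?_ ?_)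
      · have := hXc i0; omega
      · intro j hj
        have h3 := hXD' i0 j hj.symm y hy
        have h4 : N j z + T ≤ _ := hcon j
        simp only [N] at h4
        omega
    obtain ⟨i, hi⟩ := h1
    refine ⟨i, ?_⟩
    intro y hy hzy
    refine hfree (embed' G k hG R X D i z y hzy hXD' ?_ ?_)
    · have := hXc i; omega
    · intro j hj
      have h3 := hXD' i j hj.symm y hy
      have h4 := hF i j z hj.symm
      have h5 := hXc i
      have h6 := hXc j
      simp only [N] at h4 hi
      omega
  choose τ hτ using hτ
  refine ⟨τ, ?_⟩
  intro x y hxy hadj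
  refine hfree (embed' G k hG R X D (τ x) x y hadj hXD' ?_ ?_)
  · have := hXc (τ x); omega
  · intro j hj
    have h1 : ((X j).filter (fun b => ¬ R.Adj x b)).card ≤ D := hXD (τ x) j x hj.symm (hτ x)
    have h2 : ((X j).filter (fun b => ¬ R.Adj y b)).card ≤ D :=
      hXD (τ x) j y hj.symm (hxy ▸ hτ y)
    have h3 := hXc j
    omega

lemma critcol_of {V : Type*} (G : SimpleGraph V) (k : ℕ)
    (hchi : G.chromaticNumber = (k + 1 : ℕ)) (hcrit : EdgeCritical G) : CritCol G k := by
  obtain ⟨u, v, huv, h⟩ := hcrit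
  rw [hchi] at h
  have h1 : (G.deleteEdges {s(u, v)}).chromaticNumber = (k : ℕ) := by
    have : (G.deleteEdges {s(u, v)}).chromaticNumber + 1 = (k : ℕ∞) + 1 := by
      rw [h]; push_cast; rfl
    exact ENat.add_left_injective_of_ne_top ENat.one_ne_top this
  have h2 : (G.deleteEdges {s(u, v)}).Colorable k := chromaticNumber_le_iff_colorable.mp h1.le
  obtain ⟨c⟩ := h2
  have hc : ∀ a b, G.Adj a b → s(a, b) ≠ s(u, v) → c a ≠ c b := by
    intro a b hab hne
    apply c.valid
    rw [deleteEdges_adj]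
    exact ⟨hab, by simpa using hne⟩
  refine ⟨u, v, c, huv, ?_, hc⟩
  by_contra hne
  have h3 : G.Colorable k := by
    refine ⟨Coloring.mk c ?_⟩
    intro a b hab
    by_cases he : s(a, b) = s(u, v)
    · rw [Sym2.eq_iff] at he
      rcases he with ⟨rfl, rfl⟩ | ⟨rfl, rfl⟩
      · exact hne
      · exact fun h => hne h.symm
    · exact hc a b hab he
  have h4 := chromaticNumber_le_iff_colorable.mpr h3
  rw [hchi] at h4
  have : k + 1 ≤ k := by exact_mod_cast h4
  omega

lemma genFan_none_some (n t : ℕ) (p : Fin n × Fin t) : (genFan n t).Adj none (some p) := by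
  simp [genFan, SimpleGraph.fromRel_adj]

lemma genFan_some_some (n t : ℕ) (p q : Fin n × Fin t) :
    (genFan n t).Adj (some p) (some q) ↔ p ≠ q ∧ p.1 = q.1 := by
  simp only [genFan, SimpleGraph.fromRel_adj]
  constructor
  · rintro ⟨h1, h2⟩
    refine ⟨fun h => h1 (by rw [h]), ?_⟩
    simp only [reduceCtorEq, false_or, Option.some.injEq] at h2
    rcases h2 with ⟨a, b, rfl, rfl, h⟩ | ⟨a, b, rfl, rfl, h⟩
    · exact h
    · exact h.symm
  · rintro ⟨h1, h2⟩
    exact ⟨by simpa using h1, Or.inl (Or.inr ⟨p, q, rfl, rfl, h2⟩)⟩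

lemma KstarK_some_some (m ℓ : ℕ) (i j : Fin m) : (KstarK m ℓ).Adj (some i) (some j) ↔ i ≠ j := by
  simp [KstarK, SimpleGraph.fromRel_adj]

lemma KstarK_none_some (m ℓ : ℕ) (j : Fin m) :
    (KstarK m ℓ).Adj none (some j) ↔ (j : ℕ) < ℓ := by
  simp [KstarK, SimpleGraph.fromRel_adj]

lemma fan_copy {β : Type*} (B : SimpleGraph β) (n t : ℕ) (z : β) (g : Fin n × Fin t → β)
    (hg : Function.Injective g) (hz : ∀ p, B.Adj z (g p))
    (hgg : ∀ p q, p.1 = q.1 → p ≠ q → B.Adj (g p) (g q)) : containsCopy B (genFan n t) := by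
  refine ⟨⟨fun o => o.elim z g, ?_⟩, ?_⟩
  · intro a b hab
    cases a with
    | none =>
      cases b with
      | none => exact absurd hab (SimpleGraph.irrefl _)
      | some q => exact hz q
    | some p =>
      cases b with
      | none => exact (hz p).symm
      | some q =>
        rw [genFan_some_some] at hab
        exact hgg p q hab.2 hab.1
  · intro a b hab
    change a.elim z g = b.elim z g at hab
    cases a with
    | none =>
      cases b with
      | none => rfl
      | some q => exact absurd hab (hz q).ne
    | some p =>
      cases b with
      | none => exact absurd hab (hz p).ne.symm
      | some q => rw [hg hab]

lemma inj_of_card {β : Type*} (n t : ℕ) (S : Finset β) (h : n * t ≤ S.card) :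
    ∃ g : Fin n × Fin t → β, Function.Injective g ∧ ∀ p, g p ∈ S := by
  have : Nonempty (Fin n × Fin t ↪ S) := by
    apply Function.Embedding.nonempty_of_card_le
    simpa using h
  obtain ⟨e⟩ := this
  exact ⟨fun p => e p, fun a b hab => e.injective (Subtype.ext hab), fun p => (e p).2⟩

open scoped Classical in
lemma upper {V : Type*} [Fintype V] (G : SimpleGraph V) (k t : ℕ) (ht : 1 ≤ t)
    (hG : CritCol G k) : ∃ n0 : ℕ, ∀ n s, n0 ≤ n → s = n * t →
    starArrows (k * s) ((k - 1) * s + t) G (genFan n t) := by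
  have hk : 1 ≤ k := by
    obtain ⟨u, _, c, _⟩ := hG
    exact Nat.one_le_of_lt (c u).2
  set m := Fintype.card V with hmdef
  obtain ⟨C, hC⟩ := ramsey_fin m t
  obtain ⟨s0, hs0⟩ := struct2 G k C hG
  refine ⟨s0 + t + 2 * (m * (C + 1) + C) + 2, ?_⟩
  intro n s hn hs R hR
  have hmm : Fintype.card V * (C + 1) = m * (C + 1) := rfl
  by_contra hcon
  push Not at hcon
  obtain ⟨hfree, hnofan⟩ := hcon
  set ℓ := (k - 1) * s + t with hℓ
  have hsn : n ≤ s := hs ▸ Nat.le_mul_of_pos_right _ ht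
  let R' : SimpleGraph (Fin (k * s)) := R.comap some
  have hR' : ∀ i j, R'.Adj i j ↔ R.Adj (some i) (some j) := fun i j => Iff.rfl
  have hfree' : ¬ containsCopy R' G := by
    rintro ⟨f, hf⟩
    refine hfree ⟨⟨fun v => some (f v), fun h => f.map_rel h⟩, ?_⟩
    intro a b hab
    exact hf (Option.some.inj hab)
  have hblue : ∀ i j, i ≠ j → ¬ R'.Adj i j → (KstarK (k * s) ℓ \ R).Adj (some i) (some j) := by
    intro i j hij hn
    rw [SimpleGraph.sdiff_adj, KstarK_some_some]
    exact ⟨hij, hn⟩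
  have hCC : ∀ S : Finset (Fin (k * s)), C ≤ S.card →
      ∃ T ⊆ S, T.card = t ∧ ∀ x ∈ T, ∀ y ∈ T, x ≠ y → ¬ R'.Adj x y := by
    intro S hS
    rcases hC R' S hS with ⟨T, hTS, hTc, hT⟩ | h
    · exfalso
      let e : V ≃ T := Fintype.equivOfCardEq (by rw [Fintype.card_coe, hTc])
      refine hfree' ⟨⟨fun v => (e v : Fin (k * s)), ?_⟩, ?_⟩
      · intro a b hab
        refine hT _ (e a).2 _ (e b).2 ?_
        intro h
        exact hab.ne (e.injective (Subtype.ext h))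
      · intro a b hab
        exact e.injective (Subtype.ext hab)
    · exact h
  have hdeg : ∀ a, (Finset.univ.filter (fun b => ¬ R'.Adj a b)).card ≤ s + C := by
    intro a
    by_contra hlt
    push Not at hlt
    have h1 : s + C ≤ ((Finset.univ.filter (fun b => ¬ R'.Adj a b)).erase a).card := by
      have := Finset.pred_card_le_card_erase (s := Finset.univ.filter (fun b => ¬ R'.Adj a b)) (a := a)
      omega
    obtain ⟨g, hg1, hg2, hg3⟩ := tiling R' t C hCC n ((Finset.univ.filter (fun b => ¬ R'.Adj a b)).erase a) (by omega)
    refine hnofan (fan_copy _ n t (some a) (fun p => some (g p)) ?_ ?_ ?_)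
    · intro p q hpq
      exact hg1 (Option.some.inj hpq)
    · intro p
      have h2 := hg2 p
      simp only [Finset.mem_erase, Finset.mem_filter, Finset.mem_univ, true_and] at h2
      exact hblue _ _ h2.1.symm h2.2
    · intro p q hpq hne
      exact hblue _ _ (fun h => hne (hg1 h)) (hg3 p q hpq)
  have hind : ∀ S : Finset (Fin (k * s)), (∀ x ∈ S, ∀ y ∈ S, ¬ R'.Adj x y) → S.card ≤ s := by
    intro S hS
    by_contra hlt
    push Not at hlt
    obtain ⟨z, hz⟩ : S.Nonempty := Finset.card_pos.mp (by omega)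
    have h1 := Finset.card_erase_of_mem hz
    obtain ⟨g, hg1, hg2⟩ := inj_of_card n t (S.erase z) (by omega)
    refine hnofan (fan_copy _ n t (some z) (fun p => some (g p)) ?_ ?_ ?_)
    · intro p q hpq
      exact hg1 (Option.some.inj hpq)
    · intro p
      have h2 := Finset.mem_erase.mp (hg2 p)
      exact hblue _ _ h2.1.symm (hS _ hz _ h2.2)
    · intro p q hpq hne
      exact hblue _ _ (fun h => hne (hg1 h)) (hS _ (Finset.mem_erase.mp (hg2 p)).2 _
        (Finset.mem_erase.mp (hg2 q)).2)
  obtain ⟨τ, hτ⟩ := hs0 R' s (by omega) (by simp) hdeg hfree' hind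
  let Y : Fin k → Finset (Fin (k * s)) := fun i => Finset.univ.filter (fun x => τ x = i)
  have hY : ∀ i x, x ∈ Y i ↔ τ x = i := fun i x => by simp [Y]
  have hYind : ∀ i, ∀ x ∈ Y i, ∀ y ∈ Y i, ¬ R'.Adj x y := by
    intro i x hx y hy
    rw [hY] at hx hy
    exact hτ x y (hx.trans hy.symm)
  have hYdis : ∀ i j, i ≠ j → Disjoint (Y i) (Y j) := by
    intro i j hij
    rw [Finset.disjoint_left]
    intro a ha hb
    rw [hY] at ha hb
    exact hij (ha.symm.trans hb)
  have hYc : ∀ i, (Y i).card = s := by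
    have hsum : ∑ i, (Y i).card = ∑ i : Fin k, s := by
      have := Finset.card_eq_sum_card_fiberwise (s := (Finset.univ : Finset (Fin (k * s))))
        (f := τ) (t := Finset.univ) (by intro x _; simp)
      rw [Finset.card_univ, Fintype.card_fin] at this
      simp only [Finset.sum_const, Finset.card_univ, Fintype.card_fin, smul_eq_mul]
      exact this.symm
    intro i
    exact (Finset.sum_eq_sum_iff_of_le (fun i _ => hind _ (hYind i))).mp hsum i (Finset.mem_univ i)
  have hYD : ∀ i j, i ≠ j → ∀ a ∈ Y i, ((Y j).filter (fun b => ¬ R'.Adj a b)).card ≤ C := by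
    intro i j hij a ha
    have h1 : ((Y i).filter (fun b => ¬ R'.Adj a b)).card = s := by
      rw [Finset.filter_true_of_mem (hYind i a ha), hYc]
    have h2 : ((Y i).filter (fun b => ¬ R'.Adj a b)).card +
        ((Y j).filter (fun b => ¬ R'.Adj a b)).card ≤ s + C := by
      refine le_trans ?_ (hdeg a)
      rw [← Finset.card_union_of_disjoint
            (Finset.disjoint_filter_filter (hYdis _ _ hij)), ← Finset.filter_union]
      exact Finset.card_le_card (Finset.filter_subset_filter _ (Finset.subset_univ _))
    omega
  -- blue neighbours of the extra vertex
  have hBl : ∀ i, ((Y i).filter (fun j : Fin (k * s) => (j : ℕ) < ℓ ∧ ¬ R.Adj none (some j))).card < t := by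
    intro i
    by_contra hge
    push Not at hge
    obtain ⟨T, hT, hTc⟩ := Finset.exists_subset_card_eq hge
    have hT' : ∀ j ∈ T, j ∈ Y i ∧ (j : ℕ) < ℓ ∧ ¬ R.Adj none (some j) := fun j hj =>
      Finset.mem_filter.mp (hT hj)
    obtain ⟨c, hc⟩ : T.Nonempty := Finset.card_pos.mp (by omega)
    obtain ⟨n', rfl⟩ : ∃ n', n = n' + 1 := ⟨n - 1, by omega⟩
    have hTY : T ⊆ Y i := fun j hj => (hT' j hj).1
    have hrest := Finset.card_sdiff_of_subset hTY
    rw [hYc, hTc] at hrest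
    obtain ⟨g, hg1, hg2⟩ := inj_of_card n' t (Y i \ T) (by
      rw [hrest, hs, Nat.succ_mul]; omega)
    let P : Finset (Option (Fin (k * s))) := insert none ((T.erase c).map Function.Embedding.some)
    have hPc : P.card = t := by
      rw [Finset.card_insert_of_notMem (by simp), Finset.card_map, Finset.card_erase_of_mem hc]
      omega
    have hmemP : ∀ j, some j ∈ P → j ∈ T ∧ j ≠ c := by
      intro j hj
      simp [P] at hj
      tauto
    set B := KstarK (k * s) ℓ \ R with hB
    have hnone : ∀ j ∈ T, B.Adj none (some j) := by
      intro j hj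
      rw [hB, SimpleGraph.sdiff_adj, KstarK_none_some]
      exact (hT' j hj).2
    have hYB : ∀ a ∈ Y i, ∀ b ∈ Y i, a ≠ b → B.Adj (some a) (some b) := fun a ha b hb hab =>
      hblue a b hab (hYind i a ha b hb)
    have hgY : ∀ p, g p ∈ Y i ∧ g p ∉ T := fun p => Finset.mem_sdiff.mp (hg2 p)
    obtain ⟨h, hh1, hh2, hh3⟩ := tile_succ (fun x y => x ≠ y → B.Adj x y) t n' P hPc (by
      intro x hx y hy hxy
      cases x with
      | none =>
        cases y with
        | none => exact absurd rfl hxy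
        | some b => exact hnone b (hmemP b hy).1
      | some a =>
        cases y with
        | none => exact (hnone a (hmemP a hx).1).symm
        | some b => exact hYB a (hTY (hmemP a hx).1) b (hTY (hmemP b hy).1) (fun h => hxy (by rw [h])))
      (fun p => some (g p)) (fun p q hpq => hg1 (Option.some.inj hpq))
      (fun p hp => (hgY p).2 (hmemP _ hp).1)
      (fun p q _ hne => hYB _ (hgY p).1 _ (hgY q).1 (fun h => hne (by rw [h])))
    refine hnofan (fan_copy B _ t (some c) h hh1 ?_ ?_)
    · intro p
      rcases hh2 p with h1 | ⟨q, h1⟩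
      · generalize h p = x at *
        cases x with
        | none => exact (hnone c hc).symm
        | some b => exact hYB c (hTY hc) b (hTY (hmemP b h1).1) (hmemP b h1).2.symm
      · rw [h1]
        refine hYB c (hTY hc) _ (hgY q).1 ?_
        intro he
        exact (hgY q).2 (he ▸ hc)
    · intro p q hpq hne
      exact hh3 p q hpq (fun he => hne (hh1 he))
  have hNon : (Finset.univ.filter (fun j : Fin (k * s) => ¬ (j : ℕ) < ℓ)).card + t ≤ s := by
    have h1 : (Finset.univ.filter (fun j : Fin (k * s) => ¬ (j : ℕ) < ℓ)).card ≤
        (Finset.Ico ℓ (k * s)).card := by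
      refine Finset.card_le_card_of_injOn (fun j => (j : ℕ)) ?_ ?_
      · intro j hj
        simp at hj
        simp [hj]
      · intro a _ b _ hab
        exact Fin.ext hab
    rw [Nat.card_Ico] at h1
    obtain ⟨κ, rfl⟩ : ∃ κ, k = κ + 1 := ⟨k - 1, by omega⟩
    have h2 : (κ + 1) * s = κ * s + s := by ring
    simp only [Nat.add_sub_cancel] at hℓ
    omega
  have hdec : ∀ i, s ≤ ((Y i).filter (fun j => R.Adj none (some j))).card + (t - 1) +
      ((Y i).filter (fun j : Fin (k * s) => ¬ (j : ℕ) < ℓ)).card := by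
    intro i
    have h1 : Y i ⊆ (Y i).filter (fun j => R.Adj none (some j)) ∪
        (Y i).filter (fun j : Fin (k * s) => (j : ℕ) < ℓ ∧ ¬ R.Adj none (some j)) ∪
        (Y i).filter (fun j : Fin (k * s) => ¬ (j : ℕ) < ℓ) := by
      intro a ha
      simp only [Finset.mem_union, Finset.mem_filter]
      tauto
    have h2 := Finset.card_le_card h1
    have h3 := Finset.card_union_le ((Y i).filter (fun j => R.Adj none (some j)) ∪
        (Y i).filter (fun j : Fin (k * s) => (j : ℕ) < ℓ ∧ ¬ R.Adj none (some j)))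
        ((Y i).filter (fun j : Fin (k * s) => ¬ (j : ℕ) < ℓ))
    have h4 := Finset.card_union_le ((Y i).filter (fun j => R.Adj none (some j)))
        ((Y i).filter (fun j : Fin (k * s) => (j : ℕ) < ℓ ∧ ¬ R.Adj none (some j)))
    have h5 := hBl i
    rw [hYc] at h2
    omega
  obtain ⟨i0, -, hi0⟩ := Finset.exists_min_image (Finset.univ : Finset (Fin k))
    (fun i => ((Y i).filter (fun j => R.Adj none (some j))).card) ⟨⟨0, by omega⟩, Finset.mem_univ _⟩
  have hpos : 0 < ((Y i0).filter (fun j => R.Adj none (some j))).card := by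
    have h1 := hdec i0
    have h2 : ((Y i0).filter (fun j : Fin (k * s) => ¬ (j : ℕ) < ℓ)).card ≤ _ :=
      Finset.card_le_card (Finset.filter_subset_filter _ (Finset.subset_univ _))
    omega
  obtain ⟨y, hy⟩ := Finset.card_pos.mp hpos
  rw [Finset.mem_filter] at hy
  have hmapf : ∀ (z : Option (Fin (k * s))) j, (((Y j).map Function.Embedding.some).filter
      (fun b => ¬ R.Adj z b)).card = ((Y j).filter (fun b => ¬ R.Adj z (some b))).card := by
    intro z j
    rw [Finset.filter_map, Finset.card_map]
    rfl
  refine hfree (embed' G k hG R (fun i => (Y i).map Function.Embedding.some) C i0 none (some y)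
    hy.2 ?_ ?_ ?_)
  · intro i j hij a ha
    obtain ⟨a', ha', rfl⟩ := Finset.mem_map.mp ha
    rw [hmapf]
    exact hYD i j hij a' ha'
  · rw [Finset.card_map, hYc]; omega
  · intro j hj
    rw [hmapf, hmapf, Finset.card_map, hYc]
    have h1 : ((Y j).filter (fun b => ¬ R.Adj (some y) (some b))).card ≤ C :=
      hYD i0 j hj.symm y hy.1
    have h2 := hdec i0
    have h3 := hdec j
    have h4 := hi0 j (Finset.mem_univ _)
    have h5 := Finset.card_filter_add_card_filter_not (s := Y j) (fun b => R.Adj none (some b))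
    have h6 : ((Y i0).filter (fun j : Fin (k * s) => ¬ (j : ℕ) < ℓ)).card +
        ((Y j).filter (fun j : Fin (k * s) => ¬ (j : ℕ) < ℓ)).card ≤
        (Finset.univ.filter (fun j : Fin (k * s) => ¬ (j : ℕ) < ℓ)).card := by
      rw [← Finset.card_union_of_disjoint
            (Finset.disjoint_filter_filter (hYdis _ _ hj.symm)), ← Finset.filter_union]
      exact Finset.card_le_card (Finset.filter_subset_filter _ (Finset.subset_univ _))
    rw [hYc] at h5
    omega

lemma fan_class {β : Type*} (B : SimpleGraph β) (n t : ℕ) (c : β → ℕ)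
    (hc : ∀ a b, B.Adj a b → c a = c b) (f : genFan n t →g B) : ∀ p, c (f p) = c (f none) := by
  intro p
  cases p with
  | none => rfl
  | some p => exact (hc _ _ (f.map_rel (genFan_none_some n t p))).symm

lemma class_card (N s q : ℕ) (S : Finset (Fin N)) (hs : 0 < s) (h : ∀ i ∈ S, (i : ℕ) / s = q) :
    S.card ≤ s := by
  have h1 : S.card ≤ (Finset.Ico (q * s) (q * s + s)).card := by
    refine Finset.card_le_card_of_injOn (fun j => (j : ℕ)) ?_ ?_
    · intro j hj
      have h2 := h j hj
      have h3 := Nat.div_add_mod (j : ℕ) s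
      have h4 := Nat.mod_lt (j : ℕ) hs
      rw [h2, Nat.mul_comm] at h3
      simp only [Finset.coe_Ico, Set.mem_Ico]
      omega
    · intro a _ b _ hab
      exact Fin.ext hab
  simpa using h1

lemma not_colorable {V : Type*} (G : SimpleGraph V) (k : ℕ)
    (hchi : G.chromaticNumber = (k + 1 : ℕ)) : ¬ G.Colorable k := by
  intro h3
  have h4 := chromaticNumber_le_iff_colorable.mpr h3
  rw [hchi] at h4
  have : k + 1 ≤ k := by exact_mod_cast h4
  omega

lemma no_red {V β : Type*} (G : SimpleGraph V) (k : ℕ) (hG : ¬ G.Colorable k) (R : SimpleGraph β)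
    (c : β → ℕ) (hck : ∀ b, c b < k) (hc : ∀ a b, R.Adj a b → c a ≠ c b) : ¬ containsCopy R G := by
  rintro ⟨f, -⟩
  refine hG ⟨Coloring.mk (fun v => (⟨c (f v), hck _⟩ : Fin k)) ?_⟩
  intro a b hab h
  exact hc _ _ (f.map_rel hab) (Fin.mk.inj_iff.mp h)

lemma lower_ramsey {V : Type*} (G : SimpleGraph V) (k n t s N : ℕ) (hs : s = n * t) (hs0 : 0 < s)
    (hG : ¬ G.Colorable k) (hN : N ≤ k * s) : ¬ arrows N G (genFan n t) := by
  classical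
  intro h
  let R : SimpleGraph (Fin N) := SimpleGraph.mk (fun i j => (i : ℕ) / s ≠ (j : ℕ) / s)
    ⟨fun i j h => h.symm⟩ ⟨fun i h => h rfl⟩
  rcases h R with h | ⟨f, hf⟩
  · refine no_red G k hG R (fun i => (i : ℕ) / s) ?_ (fun a b h => h) h
    intro b
    exact Nat.div_lt_of_lt_mul (lt_of_lt_of_le b.2 (by rw [Nat.mul_comm s k]; try exact hN))
  · have h1 := fan_class Rᶜ n t (fun i => (i : ℕ) / s) (by
      intro a b hab
      rw [SimpleGraph.compl_adj] at hab
      by_contra hne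
      exact hab.2 hne) f
    have h2 := class_card N s ((f none : ℕ) / s) (Finset.univ.image f) hs0 (by
      intro i hi
      obtain ⟨p, -, rfl⟩ := Finset.mem_image.mp hi
      exact h1 p)
    rw [Finset.card_image_of_injective _ hf, Finset.card_univ] at h2
    simp at h2
    omega

lemma fan_nbrs (n t : ℕ) (hn : 0 < n) (p : Option (Fin n × Fin t)) :
    ∃ φ : Fin t → Option (Fin n × Fin t), Function.Injective φ ∧ ∀ b, (genFan n t).Adj p (φ b) := by
  cases p with
  | none =>
    refine ⟨fun b => some (⟨0, hn⟩, b), ?_, fun b => genFan_none_some n t _⟩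
    intro a b hab
    simpa using hab
  | some p =>
    obtain ⟨i, a⟩ := p
    refine ⟨fun b => if b = a then none else some (i, b), ?_, ?_⟩
    · intro b b' h
      dsimp only at h
      split_ifs at h with h1 h2 h2
      · rw [h1, h2]
      · simpa using h
    · intro b
      dsimp only
      split_ifs with h1
      · exact (genFan_none_some n t _).symm
      · rw [genFan_some_some]
        refine ⟨?_, rfl⟩
        intro h
        exact h1 (Prod.mk.inj h).2.symm

lemma lower_star {V : Type*} (G : SimpleGraph V) (k n t s ℓ : ℕ) (hs : s = n * t) (hs0 : 0 < s)
    (hk : 1 ≤ k) (hG : ¬ G.Colorable k) (hℓ : ℓ < (k - 1) * s + t) :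
    ¬ starArrows (k * s) ℓ G (genFan n t) := by
  classical
  intro h
  have hn : 0 < n := by
    rcases Nat.eq_zero_or_pos n with rfl | h
    · simp at hs; omega
    · exact h
  have ht : 0 < t := by
    rcases Nat.eq_zero_or_pos t with rfl | h
    · simp at hs; omega
    · exact h
  let c : Option (Fin (k * s)) → ℕ := fun o => o.elim (k - 1) (fun i => (i : ℕ) / s)
  let R : SimpleGraph (Option (Fin (k * s))) := SimpleGraph.mk
    (fun a b => (KstarK (k * s) ℓ).Adj a b ∧ c a ≠ c b)
    ⟨fun i j h => ⟨h.1.symm, h.2.symm⟩⟩ ⟨fun i h => h.2 rfl⟩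
  rcases h R (fun a b h => h.1) with h | ⟨f, hf⟩
  · refine no_red G k hG R c ?_ (fun a b h => h.2) h
    intro b
    cases b with
    | none => simp only [c, Option.elim]; omega
    | some b =>
      exact Nat.div_lt_of_lt_mul (lt_of_lt_of_le b.2 (by rw [Nat.mul_comm s k]; try exact hN))
  · have hB : ∀ a b, (KstarK (k * s) ℓ \ R).Adj a b → (KstarK (k * s) ℓ).Adj a b ∧ c a = c b := by
      intro a b hab
      rw [SimpleGraph.sdiff_adj] at hab
      refine ⟨hab.1, ?_⟩
      by_contra hne
      exact hab.2 ⟨hab.1, hne⟩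
    have h1 := fan_class _ n t c (fun a b hab => (hB a b hab).2) f
    by_cases hnone : ∃ p, f p = none
    · obtain ⟨p, hp⟩ := hnone
      obtain ⟨φ, hφ, hadj⟩ := fan_nbrs n t hn p
      have h2 : ∀ b, ∃ j : Fin (k * s), f (φ b) = some j ∧ (j : ℕ) < ℓ ∧ (k - 1) * s ≤ (j : ℕ) := by
        intro b
        have h3 := hB _ _ (f.map_rel (hadj b))
        rw [hp] at h3
        cases hfb : f (φ b) with
        | none => rw [hfb] at h3; exact absurd h3.1 (SimpleGraph.irrefl _)
        | some j =>
          rw [hfb, KstarK_none_some] at h3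
          refine ⟨j, rfl, h3.1, ?_⟩
          have h4 : k - 1 = (j : ℕ) / s := h3.2
          rw [h4]
          exact Nat.div_mul_le_self _ _
      choose j hj1 hj2 hj3 using h2
      have h5 : (Finset.univ : Finset (Fin t)).card ≤ (Finset.Ico ((k - 1) * s) ℓ).card := by
        refine Finset.card_le_card_of_injOn (fun b => (j b : ℕ)) ?_ ?_
        · intro b _
          simp only [Finset.coe_Ico, Set.mem_Ico]
          exact ⟨hj3 b, hj2 b⟩
        · intro a _ b _ hab
          have h6 : j a = j b := Fin.ext hab
          apply hφ
          apply hf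
          rw [hj1, hj1, h6]
      simp at h5
      omega
    · push Not at hnone
      have h2 : ∀ p, ∃ j, f p = some j := fun p => Option.ne_none_iff_exists'.mp (hnone p)
      choose j hj using h2
      have h3 := class_card (k * s) s (c (f none)) (Finset.univ.image j) hs0 (by
        intro i hi
        obtain ⟨p, -, rfl⟩ := Finset.mem_image.mp hi
        rw [← h1 p, hj p]
        rfl)
      rw [Finset.card_image_of_injective _ (fun a b hab => hf (by rw [hj, hj, hab])),
        Finset.card_univ] at h3
      simp at h3
      omega

lemma arrows_of_star {V W : Type*} (G : SimpleGraph V) (H : SimpleGraph W) (N ℓ : ℕ)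
    (h : starArrows N ℓ G H) : arrows (N + 1) G H := by
  intro R
  let e : Fin (N + 1) ≃ Option (Fin N) := finSuccEquiv N
  let R1 : SimpleGraph (Option (Fin N)) := R.comap e.symm ⊓ KstarK N ℓ
  rcases h R1 inf_le_right with ⟨f, hf⟩ | ⟨f, hf⟩
  · left
    refine ⟨⟨fun v => e.symm (f v), fun hab => (f.map_rel hab).1⟩, ?_⟩
    intro a b hab
    exact hf (e.symm.injective hab)
  · right
    refine ⟨⟨fun v => e.symm (f v), ?_⟩, ?_⟩
    · intro a b hab
      have h1 : (KstarK N ℓ \ R1).Adj (f a) (f b) := f.map_rel hab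
      rw [SimpleGraph.sdiff_adj] at h1
      rw [SimpleGraph.compl_adj]
      refine ⟨fun he => h1.1.ne (e.symm.injective he), fun hr => h1.2 ⟨hr, h1.1⟩⟩
    · intro a b hab
      exact hf (e.symm.injective hab)

theorem statement_3 (k t : ℕ) (hk : 2 ≤ k) (ht : 2 ≤ t)
    {V : Type*} [Fintype V] (G : SimpleGraph V)
    (hchi : G.chromaticNumber = (k + 1 : ℕ)) (hcrit : EdgeCritical G) :
    ∃ n₀ : ℕ, ∀ n : ℕ, n₀ ≤ n →
      starRamsey G (genFan n t) = (k - 1) * n * t + t := by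
  obtain ⟨n0, hn0⟩ := upper G k t (by omega) (critcol_of G k hchi hcrit)
  have hG := not_colorable G k hchi
  refine ⟨n0 + 1, fun n hn => ?_⟩
  obtain ⟨s, hs⟩ : ∃ s, s = n * t := ⟨_, rfl⟩
  have hs0 : 0 < s := by rw [hs]; exact Nat.mul_pos (by omega) (by omega)
  have hup := hn0 n s (by omega) hs
  have hram : ramseyNumber G (genFan n t) = k * s + 1 := by
    apply le_antisymm
    · exact Nat.sInf_le ⟨by omega, arrows_of_star _ _ _ _ hup⟩
    · refine le_csInf ⟨k * s + 1, by omega, arrows_of_star _ _ _ _ hup⟩ ?_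
      rintro N ⟨-, hN⟩
      by_contra hlt
      exact lower_ramsey G k n t s N hs hs0 hG (by omega) hN
  rw [Nat.mul_assoc, ← hs]
  unfold starRamsey
  rw [hram, Nat.add_sub_cancel]
  apply le_antisymm
  · exact Nat.sInf_le hup
  · refine le_csInf ⟨_, hup⟩ ?_
    intro ℓ hℓ
    by_contra hlt
    exact lower_star G k n t s ℓ hs hs0 (by omega) hG (by omega) hℓ
end
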